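/- arXiv:math/0106263 — 6 statements merged into one kernel-verified Lean document; each statement's English description precedes it below -/
import Mathlib

section
/- Let n ≥ 3 be an integer and R > 0 a real constant. The equation h'' - (nR/(4(n-1))) h^(1-4/n) = -(n/4) C h admits a nonconstant positive periodic solution h : ℝ → ℝ if and only if the constant C is strictly positive. -/
open Real

open Filter Topology in
theorem morse_aux (V W : ℝ → ℝ) (x0 c : ℝ) (hV : AnalyticAt ℝ V x0) (hV0 : V x0 = 0)
    (hVW : ∀ᶠ x in 𝓝 x0, HasDerivAt V (W x) x) (hW0 : W x0 = 0)
    (hWc : HasDerivAt W c x0) (hc : 0 < c) :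
    ∃ X : ℝ → ℝ, ContDiffAt ℝ 1 X 0 ∧ X 0 = x0 ∧ 0 < deriv X 0 ∧
      ∀ᶠ s in 𝓝 (0:ℝ), W (X s) * deriv X s = s := by
  obtain ⟨g, hg, hVg⟩ : ∃ g : ℝ → ℝ, AnalyticAt ℝ g x0 ∧ ∀ x, V x = (x - x0) ^ 2 * g x := by
    obtain ⟨P, hP⟩ := hV
    refine ⟨dslope (dslope V x0) x0, ⟨_, hP.has_fpower_series_iterate_dslope_fslope 2⟩, ?_⟩
    intro x
    have h1 := sub_smul_dslope V x0 x
    have h2 := sub_smul_dslope (dslope V x0) x0 x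
    have h3 : dslope V x0 x0 = 0 := by
      rw [dslope_same, hVW.self_of_nhds.deriv, hW0]
    simp only [smul_eq_mul] at h1 h2
    rw [hV0] at h1
    rw [h3] at h2
    linear_combination -h1 - (x - x0) * h2
  have hgd : ∀ᶠ x in 𝓝 x0, AnalyticAt ℝ g x := hg.eventually_analyticAt
  have hW1 : ∀ᶠ x in 𝓝 x0, W x = 2 * (x - x0) * g x + (x - x0) ^ 2 * deriv g x := by
    filter_upwards [hVW, hgd] with x h1 h2
    have h3 : HasDerivAt (fun y => (y - x0) ^ 2 * g y)
        (2 * (x - x0) * g x + (x - x0) ^ 2 * deriv g x) x := by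
      have := (((hasDerivAt_id x).sub_const x0).pow 2).mul h2.differentiableAt.hasDerivAt
      refine this.congr_deriv ?_
      simp
    rw [← funext hVg] at h3
    exact h1.unique h3
  have hgc : 2 * g x0 = c := by
    have h3 : HasDerivAt (fun x => 2 * (x - x0) * g x + (x - x0) ^ 2 * deriv g x) (2 * g x0) x0 := by
      have h4 := (((hasDerivAt_id x0).sub_const x0).const_mul 2).mul hg.differentiableAt.hasDerivAt
      have h5 := (((hasDerivAt_id x0).sub_const x0).pow 2).mul hg.deriv.differentiableAt.hasDerivAt
      refine (h4.add h5).congr_deriv ?_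
      simp
    exact (h3.congr_of_eventuallyEq hW1).unique hWc
  have hg0 : 0 < g x0 := by linarith
  set G : ℝ → ℝ := fun x => (x - x0) * √(2 * g x) with hG
  have hGc : ContDiffAt ℝ 1 G x0 := by
    have h1 : ContDiffAt ℝ 1 g x0 := hg.contDiffAt
    refine (contDiffAt_id.sub contDiffAt_const).mul ((contDiffAt_const.mul h1).sqrt ?_)
    positivity
  have hsq : 0 < √(2 * g x0) := by positivity
  have hGd : HasDerivAt G (√(2 * g x0)) x0 := by
    have h1 : ContDiffAt ℝ 1 g x0 := hg.contDiffAt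
    have h2 : ContDiffAt ℝ 1 (fun x => √(2 * g x)) x0 :=
      (contDiffAt_const.mul h1).sqrt (by positivity)
    have := ((hasDerivAt_id x0).sub_const x0).mul (h2.differentiableAt (by simp)).hasDerivAt
    refine this.congr_deriv ?_
    simp
  have hGf := hGd.hasFDerivAt_equiv hsq.ne'
  have hG0 : G x0 = 0 := by simp [hG]
  set X := hGc.localInverse hGf one_ne_zero with hX
  have hX1 : ContDiffAt ℝ 1 X 0 := by
    have := hGc.to_localInverse hGf one_ne_zero
    rwa [hG0] at this
  have hX0 : X 0 = x0 := by
    have := hGc.localInverse_apply_image hGf one_ne_zero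
    rwa [hG0] at this
  have hGX : ∀ᶠ s in 𝓝 (0:ℝ), G (X s) = s := by
    have := (hGc.hasStrictFDerivAt' hGf one_ne_zero).eventually_right_inverse
    rwa [hG0] at this
  have hXt : Tendsto X (𝓝 0) (𝓝 x0) := by
    have := hX1.continuousAt.tendsto
    rwa [hX0] at this
  have hXd : ∀ᶠ s in 𝓝 (0:ℝ), ContDiffAt ℝ 1 X s := hX1.eventually (by simp)
  have hgpos : ∀ᶠ x in 𝓝 x0, 0 < g x := hg.continuousAt.eventually (lt_mem_nhds hg0)
  have hVX : ∀ᶠ s in 𝓝 (0:ℝ), V (X s) = s ^ 2 / 2 := by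
    filter_upwards [hGX, hXt.eventually hgpos] with s h1 h2
    rw [hVg]
    have h3 : G (X s) ^ 2 = (X s - x0) ^ 2 * (2 * g (X s)) := by
      simp only [hG]
      rw [mul_pow, Real.sq_sqrt (by positivity)]
    rw [h1] at h3
    linarith
  refine ⟨X, hX1, hX0, ?_, ?_⟩
  · have h1 := (hX1.differentiableAt (by simp)).hasDerivAt
    rw [← hX0] at hGd
    have h2 := hGd.comp 0 h1
    have h3 := (h2.congr_of_eventuallyEq (f₁ := id) (hGX.mono fun s hs => hs.symm)).unique
      (hasDerivAt_id 0)
    rw [hX0] at h3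
    by_contra hneg
    nlinarith
  · filter_upwards [hVX.eventually_nhds, hXd, hXt.eventually hVW] with s h1 h2 h3
    have h4 := h3.comp s (h2.differentiableAt (by simp)).hasDerivAt
    have h5 : HasDerivAt (fun s : ℝ => s ^ 2 / 2) s s := by
      have := ((hasDerivAt_id s).pow 2).div_const 2
      refine this.congr_deriv ?_
      simp
    exact h4.unique (h5.congr_of_eventuallyEq h1)

theorem periodic_aux (X F : ℝ → ℝ) (δ : ℝ) (hδ : 0 < δ)
    (hX : ∀ s, |s| < δ → ContDiffAt ℝ 1 X s ∧ 0 < deriv X s ∧ 0 < X s ∧ F (X s) * deriv X s = s) :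
    ∃ h v : ℝ → ℝ, (∀ t, 0 < h t) ∧ (∀ t, HasDerivAt h (v t) t) ∧
      (∀ t, HasDerivAt v (- F (h t)) t) ∧ v 0 ≠ 0 ∧ ∃ T, 0 < T ∧ Function.Periodic h T := by
  set ρ := δ / 2 with hρ
  have hρ0 : 0 < ρ := by positivity
  have hlt : ∀ θ, |ρ * sin θ| < δ := by
    intro θ
    rw [abs_mul, abs_of_pos hρ0]
    have := abs_sin_le_one θ
    nlinarith [abs_nonneg (sin θ)]
  set P : ℝ → ℝ := fun θ => deriv X (ρ * sin θ) with hP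
  have hPpos : ∀ θ, 0 < P θ := fun θ => (hX _ (hlt θ)).2.1
  have hPc : Continuous P := by
    rw [continuous_iff_continuousAt]
    intro θ
    have h1 : ContinuousAt (deriv X) (ρ * sin θ) :=
      ((hX _ (hlt θ)).1.continuousAt_fderiv one_ne_zero).clm_apply continuousAt_const
    exact ContinuousAt.comp (g := deriv X) (f := fun θ => ρ * sin θ) h1 (by fun_prop)
  have hPp : Function.Periodic P (2 * π) := fun θ => by simp [hP]
  set τ : ℝ → ℝ := fun θ => ∫ x in 0..θ, P x with hτ
  have hτd : ∀ θ, HasDerivAt τ (P θ) θ := fun θ => hPc.integral_hasStrictDerivAt 0 θ |>.hasDerivAt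
  have hτm : StrictMono τ := strictMono_of_deriv_pos fun θ => by rw [(hτd θ).deriv]; exact hPpos θ
  have hτc : Continuous τ := continuous_iff_continuousAt.2 fun θ => (hτd θ).continuousAt
  have hτs : Function.Surjective τ := hτc.surjective
    (hPp.tendsto_atTop_intervalIntegral_of_pos' (hPc.intervalIntegrable _ _) hPpos (by positivity))
    (hPp.tendsto_atBot_intervalIntegral_of_pos' (hPc.intervalIntegrable _ _) hPpos (by positivity))
  let e : ℝ ≃o ℝ := hτm.orderIsoOfSurjective τ hτs
  have he : ∀ t, τ (e.symm t) = t := fun t => e.apply_symm_apply t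
  have he' : ∀ t, e.symm (τ t) = t := fun t => e.symm_apply_apply t
  have hθd : ∀ t, HasDerivAt e.symm (P (e.symm t))⁻¹ t := fun t =>
    HasDerivAt.of_local_left_inverse e.symm.continuous.continuousAt (hτd _) (hPpos _).ne'
      (Filter.Eventually.of_forall he)
  have hsd : ∀ t, HasDerivAt (fun t => ρ * sin (e.symm t))
      (ρ * (cos (e.symm t) * (P (e.symm t))⁻¹)) t := fun t => (hθd t).sin.const_mul ρ
  refine ⟨fun t => X (ρ * sin (e.symm t)), fun t => ρ * cos (e.symm t),
    fun t => (hX _ (hlt _)).2.2.1, ?_, ?_, ?_, τ (2 * π), ?_, ?_⟩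
  · intro t
    have h1 := ((hX _ (hlt (e.symm t))).1.differentiableAt (by simp)).hasDerivAt
    have h2 := HasDerivAt.comp t h1 (hsd t)
    refine h2.congr_deriv ?_
    change P (e.symm t) * _ = _
    have := (hPpos (e.symm t)).ne'
    field_simp
  · intro t
    refine ((hθd t).cos.const_mul ρ).congr_deriv ?_
    have h1 := (hX _ (hlt (e.symm t))).2.2.2
    change _ * P (e.symm t) = _ at h1
    have := (hPpos (e.symm t)).ne'
    field_simp
    linarith
  · have h0 : e.symm 0 = 0 := by
      have := he' 0
      simpa [hτ] using this
    simp [h0, hρ0.ne']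
  · have h0 : τ 0 = 0 := by simp [hτ]
    rw [← h0]; exact hτm (by positivity)
  · intro t
    have h1 : e.symm (t + τ (2 * π)) = e.symm t + 2 * π := by
      have h2 : τ (e.symm t + 2 * π) = t + τ (2 * π) := by
        have h3 := hPp.intervalIntegral_add_eq (e.symm t) 0
        have h4 := intervalIntegral.integral_add_adjacent_intervals
          (hPc.intervalIntegrable (μ := MeasureTheory.volume) 0 (e.symm t)) (hPc.intervalIntegrable (e.symm t) (e.symm t + 2 * π))
        have h5 := he t
        simp only [hτ] at h5 ⊢
        rw [← h4, h3, h5]; simp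
      rw [← h2, he']
    simp [h1]

open Filter Topology in
theorem exists_aux (a b p : ℝ) (ha : 0 < a) (hb : 0 < b) (hp : p < 1) (hp1 : p + 1 ≠ 0) :
    ∃ h v : ℝ → ℝ, (∀ t, 0 < h t) ∧ (∀ t, HasDerivAt h (v t) t) ∧
      (∀ t, HasDerivAt v (- (b * h t - a * h t ^ p)) t) ∧ v 0 ≠ 0 ∧
      ∃ T, 0 < T ∧ Function.Periodic h T := by
  obtain ⟨x0, hx0, hx⟩ : ∃ x0 : ℝ, 0 < x0 ∧ a * x0 ^ (p - 1) = b := by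
    refine ⟨(b / a) ^ (1 / (p - 1)), by positivity, ?_⟩
    rw [← rpow_mul (by positivity), one_div_mul_cancel (by linarith), rpow_one]
    field_simp
  have hxp : a * x0 ^ p = b * x0 := by
    rw [← hx, rpow_sub_one hx0.ne']; field_simp
  set V0 : ℝ → ℝ := fun x => b * x ^ 2 / 2 - a / (p + 1) * x ^ (p + 1) with hV0
  have hpos : ∀ᶠ x in 𝓝 x0, 0 < x := lt_mem_nhds hx0
  have hA1 : AnalyticAt ℝ (fun x => V0 x - V0 x0) x0 := by
    have h1 : AnalyticAt ℝ (fun x : ℝ => x ^ (p + 1)) x0 := by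
      exact ContDiffAt.analyticAt (contDiffAt_rpow_const_of_ne hx0.ne')
    have h2 : AnalyticAt ℝ (fun x : ℝ => x ^ 2) x0 := by fun_prop
    exact (((analyticAt_const.mul h2).div analyticAt_const (by norm_num)).sub
      (analyticAt_const.mul h1)).sub analyticAt_const
  have hA2 : ∀ᶠ x in 𝓝 x0, HasDerivAt (fun x => V0 x - V0 x0) (b * x - a * x ^ p) x := by
    filter_upwards [hpos] with x hx
    have h1 := (hasDerivAt_rpow_const (p := p + 1) (Or.inl hx.ne')).const_mul (a / (p + 1))
    have h2 := (((hasDerivAt_id x).pow 2).const_mul b).div_const 2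
    refine ((h2.sub h1).sub_const _).congr_deriv ?_
    simp
    field_simp
  have hA3 : HasDerivAt (fun x => b * x - a * x ^ p) (b * (1 - p)) x0 := by
    have h1 := (hasDerivAt_rpow_const (p := p) (Or.inl hx0.ne')).const_mul a
    have h2 := (hasDerivAt_id x0).const_mul b
    refine (h2.sub h1).congr_deriv ?_
    rw [← hx]; ring
  obtain ⟨X, hX1, hX0, hXd, hXW⟩ := morse_aux (fun x => V0 x - V0 x0) (fun x => b * x - a * x ^ p)
    x0 (b * (1 - p)) hA1 (by simp) hA2 (by simp [hxp]) hA3 (by nlinarith)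
  have hXd' : ∀ᶠ s in 𝓝 (0:ℝ), ContDiffAt ℝ 1 X s := hX1.eventually (by simp)
  have hc : ContinuousAt (deriv X) 0 := (hX1.continuousAt_fderiv one_ne_zero).clm_apply continuousAt_const
  have hXp : ∀ᶠ s in 𝓝 (0:ℝ), 0 < X s :=
    hX1.continuousAt.eventually (lt_mem_nhds (by rwa [hX0]))
  have hall := hXd'.and ((hc.eventually (lt_mem_nhds hXd)).and (hXp.and hXW))
  obtain ⟨δ, hδ, H⟩ := Metric.eventually_nhds_iff.1 hall
  exact periodic_aux X (fun x => b * x - a * x ^ p) δ hδ fun s hs => H (by simpa using hs)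

theorem derdzinski_nonconstant_periodic_solution_iff_C_pos
    (n : ℕ) (hn : 3 ≤ n) (R C : ℝ) (hR : 0 < R) :
    (∃ h : ℝ → ℝ,
      ContDiff ℝ 2 h ∧
      (∀ t, 0 < h t) ∧
      (¬ ∃ a : ℝ, ∀ t, h t = a) ∧
      (∃ T : ℝ, 0 < T ∧ Function.Periodic h T) ∧
      (∀ t, deriv (deriv h) t
          - ((n : ℝ) * R / (4 * ((n : ℝ) - 1))) * h t ^ (1 - 4 / (n : ℝ))
          = -((n : ℝ) / 4) * C * h t)) ↔ 0 < C := by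
  have hn' : (3 : ℝ) ≤ n := by exact_mod_cast hn
  have ha : 0 < (n : ℝ) * R / (4 * ((n : ℝ) - 1)) := by
    have : 0 < (n : ℝ) - 1 := by linarith
    positivity
  constructor
  · rintro ⟨h, hh, hpos, -, ⟨T, hT, hper⟩, heq⟩
    by_contra hC
    have hC' : C ≤ 0 := not_lt.1 hC
    have hm : StrictMono (deriv h) := strictMono_of_deriv_pos fun t => by
      have h1 := heq t
      have h2 := mul_pos ha (rpow_pos_of_pos (hpos t) (1 - 4 / (n : ℝ)))
      have h3 : 0 ≤ -((n : ℝ) / 4) * C * h t := by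
        have : 0 ≤ (n : ℝ) / 4 * (-C) * h t :=
          mul_nonneg (mul_nonneg (by positivity) (by linarith)) (hpos t).le
        linarith
      linarith
    have h1 := hm hT
    have h2 : deriv h T = deriv h 0 := by
      have h3 : (fun x => h (x + T)) = h := funext hper
      have h4 := deriv_comp_add_const h T 0
      rw [h3] at h4
      simpa using h4.symm
    linarith
  · intro hC
    have h4n : 4 / (n : ℝ) ≤ 4 / 3 := by gcongr
    have h4n' : 0 < 4 / (n : ℝ) := by positivity
    obtain ⟨h, v, hpos, hd, hvd, hv0, hT⟩ := exists_aux _ ((n : ℝ) / 4 * C) (1 - 4 / (n : ℝ)) ha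
      (by positivity) (by linarith) (by linarith)
    have hdh : deriv h = v := funext fun t => (hd t).deriv
    have hdv := funext fun t => (hvd t).deriv
    have hc : Continuous h := continuous_iff_continuousAt.2 fun t => (hd t).continuousAt
    refine ⟨h, ?_, hpos, ?_, hT, ?_⟩
    · rw [show (2 : WithTop ℕ∞) = 1 + 1 by norm_num, contDiff_succ_iff_deriv]
      refine ⟨fun t => (hd t).differentiableAt, by simp, ?_⟩
      rw [hdh, contDiff_one_iff_deriv]
      refine ⟨fun t => (hvd t).differentiableAt, ?_⟩
      rw [hdv]
      exact ((continuous_const.mul hc).sub (continuous_const.mul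
        (hc.rpow_const fun t => Or.inl (hpos t).ne'))).neg
    · rintro ⟨a, hha⟩
      apply hv0
      rw [← hdh, funext hha]
      simp
    · intro t
      rw [hdh, (hvd t).deriv]
      ring
end

section
/- Let n ≥ 3 be an integer, R > 0, C > 0 real constants, and T > 0. If h₁ and h₂ are two positive T-periodic solutions of h'' - (nR/(4(n-1))) h^(1-4/n) = -(n/4) C h having the same energy, i.e. (1/2) h₁'² + V(h₁) and (1/2) h₂'² + V(h₂) are equal to the same constant where V(u) = (nC/8) u² - (n²R/(8(n-1)(n-2))) u^(2-4/n), then h₂ is a translate of h₁: there exists s ∈ ℝ such that h₂(t) = h₁(t+s) for all t ∈ ℝ. -/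
open Real

theorem dz_max (h : ℝ → ℝ) (T : ℝ) (hT : 0 < T) (hsm : ContDiff ℝ 2 h) (hper : Function.Periodic h T) :
    ∃ a b : ℝ, (∀ t, h a ≤ h t) ∧ (∀ t, h t ≤ h b) ∧ deriv h b = 0 ∧ deriv (deriv h) b ≤ 0 := by
  have hc : IsCompact (Set.range h) := hper.compact_of_continuous hT.ne' hsm.continuous
  obtain ⟨_, ⟨a, rfl⟩, ha⟩ := hc.exists_isLeast (Set.range_nonempty h)
  obtain ⟨_, ⟨b, rfl⟩, hb⟩ := hc.exists_isGreatest (Set.range_nonempty h)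
  have hmax : ∀ t, h t ≤ h b := fun t => hb ⟨t, rfl⟩
  have hlm : IsLocalMax h b := Filter.Eventually.of_forall hmax
  refine ⟨a, b, fun t => ha ⟨t, rfl⟩, hmax, hlm.deriv_eq_zero, ?_⟩
  by_contra hlt
  push Not at hlt
  have hmin := isLocalMin_of_deriv_deriv_pos hlt hlm.deriv_eq_zero hsm.continuous.continuousAt
  have heq : h =ᶠ[nhds b] fun _ => h b := by
    filter_upwards [hmin] with t ht using le_antisymm (hmax t) ht
  have h2 := heq.deriv.deriv_eq
  simp at h2
  linarith

theorem dz_mono (A B q M N : ℝ) (hA : 0 < A) (hB : 0 < B) (hq : 0 < q) (hq2 : 0 < 2 - q)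
    (hM : 0 < M) (hMN : M < N) (hcond : B * (2 - q) * M ^ (1 - q) ≤ 2 * A * M) :
    A * M ^ 2 - B * M ^ (2 - q) < A * N ^ 2 - B * N ^ (2 - q) := by
  have hd : ∀ u : ℝ, 0 < u → HasDerivAt (fun u : ℝ => A * u ^ 2 - B * u ^ (2 - q))
      (2 * A * u - B * (2 - q) * u ^ (1 - q)) u := by
    intro u hu
    have h1 := ((hasDerivAt_pow 2 u).const_mul A).sub
      ((Real.hasDerivAt_rpow_const (p := 2 - q) (Or.inl hu.ne')).const_mul B)
    have e : 2 * A * u - B * (2 - q) * u ^ (1 - q)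
        = A * (((2 : ℕ) : ℝ) * u ^ (2 - 1)) - B * ((2 - q) * u ^ (2 - q - 1)) := by
      rw [show 2 - q - 1 = 1 - q by ring]
      push_cast
      ring
    rw [e]
    exact h1
  have hs : ∀ u : ℝ, 0 < u → u ^ (1 - q) = u * u ^ (-q) := by
    intro u hu
    rw [sub_eq_add_neg, Real.rpow_add hu, Real.rpow_one]
  have hmono : StrictMonoOn (fun u : ℝ => A * u ^ 2 - B * u ^ (2 - q)) (Set.Icc M N) := by
    apply strictMonoOn_of_deriv_pos (convex_Icc M N)
    · intro u hu
      exact (hd u (hM.trans_le hu.1)).continuousAt.continuousWithinAt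
    · intro u hu
      rw [interior_Icc] at hu
      have hu0 : 0 < u := hM.trans hu.1
      rw [(hd u hu0).deriv, hs u hu0]
      rw [hs M hM] at hcond
      have h1 : B * (2 - q) * M ^ (-q) ≤ 2 * A := by
        apply le_of_mul_le_mul_right _ hM
        linarith
      have h2 : u ^ (-q) < M ^ (-q) := Real.rpow_lt_rpow_of_neg hM hu.1 (by linarith)
      have h3 : B * (2 - q) * u ^ (-q) < B * (2 - q) * M ^ (-q) :=
        mul_lt_mul_of_pos_left h2 (mul_pos hB hq2)
      have h4 := mul_pos hu0 (sub_pos.2 (h3.trans_le h1))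
      linarith
  exact hmono (Set.left_mem_Icc.2 hMN.le) (Set.right_mem_Icc.2 hMN.le) hMN

theorem dz_lip (b c p m M : ℝ) (hm : 0 < m) :
    ∃ K : NNReal, LipschitzOnWith K (fun z : ℝ × ℝ => (z.2, b * z.1 ^ p - c * z.1))
      (Set.Icc m M ×ˢ Set.univ) := by
  have hcd : ContDiffOn ℝ 1 (fun x : ℝ => b * x ^ p - c * x) (Set.Icc m M) := by
    intro x hx
    have : ContDiffAt ℝ 1 (fun x : ℝ => x ^ p) x :=
      Real.contDiffAt_rpow_const_of_ne (hm.trans_le hx.1).ne'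
    exact ((contDiffAt_const.mul this).sub (contDiffAt_const.mul contDiffAt_id)).contDiffWithinAt
  obtain ⟨K, hK⟩ := hcd.exists_lipschitzOnWith one_ne_zero (convex_Icc m M) isCompact_Icc
  have h2 : LipschitzOnWith (1 : NNReal) (fun z : ℝ × ℝ => z.2) (Set.Icc m M ×ˢ Set.univ) :=
    LipschitzWith.prod_snd.lipschitzOnWith
  have h1 : LipschitzOnWith (1 : NNReal) (fun z : ℝ × ℝ => z.1) (Set.Icc m M ×ˢ Set.univ) :=
    LipschitzWith.prod_fst.lipschitzOnWith
  exact ⟨_, h2.prodMk (hK.comp h1 (fun z hz => hz.1))⟩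

theorem dz_sol (h : ℝ → ℝ) (hsm : ContDiff ℝ 2 h) (b c p s : ℝ)
    (hode : ∀ t, deriv (deriv h) t = b * h t ^ p - c * h t) (t : ℝ) :
    HasDerivAt (fun t => (h (t + s), deriv h (t + s)))
      (deriv h (t + s), b * h (t + s) ^ p - c * h (t + s)) t := by
  have hd : ContDiff ℝ 1 (deriv h) := hsm.deriv' (n := 1)
  have h1 : HasDerivAt h (deriv h (t + s)) (t + s) :=
    (hsm.differentiable (by norm_num) _).hasDerivAt
  have h2 : HasDerivAt (deriv h) (b * h (t + s) ^ p - c * h (t + s)) (t + s) := by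
    rw [← hode]
    exact (hd.differentiable (by norm_num) _).hasDerivAt
  exact (h1.comp_add_const t s).prodMk (h2.comp_add_const t s)

/-- Two positive `T`-periodic solutions of Derdzinski's equation
`h'' - (nR/(4(n-1))) h^(1-4/n) = -(n/4) C h` with the same energy
`(1/2) h'² + (nC/8) h² - (n²R/(8(n-1)(n-2))) h^(2-4/n)` are translates of each other. -/
theorem derdzinski_same_energy_implies_translate
    (n : ℕ) (hn : 3 ≤ n) (R C T : ℝ) (hR : 0 < R) (hC : 0 < C) (hT : 0 < T)
    (h₁ h₂ : ℝ → ℝ)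
    (hsm₁ : ContDiff ℝ 2 h₁) (hsm₂ : ContDiff ℝ 2 h₂)
    (hpos₁ : ∀ t, 0 < h₁ t) (hpos₂ : ∀ t, 0 < h₂ t)
    (hper₁ : Function.Periodic h₁ T) (hper₂ : Function.Periodic h₂ T)
    (hode₁ : ∀ t, deriv (deriv h₁) t
        - ((n : ℝ) * R / (4 * ((n : ℝ) - 1))) * h₁ t ^ (1 - 4 / (n : ℝ))
        = -((n : ℝ) / 4) * C * h₁ t)
    (hode₂ : ∀ t, deriv (deriv h₂) t
        - ((n : ℝ) * R / (4 * ((n : ℝ) - 1))) * h₂ t ^ (1 - 4 / (n : ℝ))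
        = -((n : ℝ) / 4) * C * h₂ t)
    (E : ℝ)
    (hE₁ : ∀ t, (1 / 2) * (deriv h₁ t) ^ 2
        + ((n : ℝ) * C / 8) * h₁ t ^ 2
        - ((n : ℝ) ^ 2 * R / (8 * ((n : ℝ) - 1) * ((n : ℝ) - 2))) * h₁ t ^ (2 - 4 / (n : ℝ))
        = E)
    (hE₂ : ∀ t, (1 / 2) * (deriv h₂ t) ^ 2
        + ((n : ℝ) * C / 8) * h₂ t ^ 2
        - ((n : ℝ) ^ 2 * R / (8 * ((n : ℝ) - 1) * ((n : ℝ) - 2))) * h₂ t ^ (2 - 4 / (n : ℝ))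
        = E) :
    ∃ s : ℝ, ∀ t : ℝ, h₂ t = h₁ (t + s) := by
  have hn3 : (3 : ℝ) ≤ n := by exact_mod_cast hn
  obtain ⟨a₁, b₁, hmin₁, hmax₁, hd₁, hdd₁⟩ := dz_max h₁ T hT hsm₁ hper₁
  obtain ⟨a₂, b₂, hmin₂, hmax₂, hd₂, hdd₂⟩ := dz_max h₂ T hT hsm₂ hper₂
  have hA : 0 < (n : ℝ) * C / 8 := by positivity
  have hB : 0 < (n : ℝ) ^ 2 * R / (8 * ((n : ℝ) - 1) * ((n : ℝ) - 2)) := by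
    have : 0 < (n : ℝ) - 1 := by linarith
    have : 0 < (n : ℝ) - 2 := by linarith
    positivity
  have hq : 0 < 4 / (n : ℝ) := by positivity
  have hq2 : 0 < 2 - 4 / (n : ℝ) := by
    rw [sub_pos, div_lt_iff₀ (by linarith)]
    linarith
  have hBp : (n : ℝ) ^ 2 * R / (8 * ((n : ℝ) - 1) * ((n : ℝ) - 2)) * (2 - 4 / (n : ℝ))
      = (n : ℝ) * R / (4 * ((n : ℝ) - 1)) := by
    have : (n : ℝ) - 1 ≠ 0 := by linarith
    have : (n : ℝ) - 2 ≠ 0 := by linarith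
    have : (n : ℝ) ≠ 0 := by linarith
    field_simp
    ring
  have hM : h₁ b₁ = h₂ b₂ := by
    have e₁ := hE₁ b₁
    have e₂ := hE₂ b₂
    rw [hd₁] at e₁
    rw [hd₂] at e₂
    have o₁ := hode₁ b₁
    have o₂ := hode₂ b₂
    rcases lt_trichotomy (h₁ b₁) (h₂ b₂) with hlt | heq | hgt
    · have := dz_mono _ _ _ _ _ hA hB hq hq2 (hpos₁ b₁) hlt (by rw [hBp]; linarith)
      linarith
    · exact heq
    · have := dz_mono _ _ _ _ _ hA hB hq hq2 (hpos₂ b₂) hgt (by rw [hBp]; linarith)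
      linarith
  obtain ⟨K, hK⟩ := dz_lip ((n : ℝ) * R / (4 * ((n : ℝ) - 1))) ((n : ℝ) / 4 * C)
    (1 - 4 / (n : ℝ)) (min (h₁ a₁) (h₂ a₂)) (h₁ b₁) (lt_min (hpos₁ _) (hpos₂ _))
  have key := ODE_solution_unique_univ (t₀ := 0) (fun _ => hK)
    (f := fun t => (h₁ (t + b₁), deriv h₁ (t + b₁)))
    (g := fun t => (h₂ (t + b₂), deriv h₂ (t + b₂)))
    (fun t => ⟨dz_sol h₁ hsm₁ _ _ _ b₁ (fun t => by linarith [hode₁ t]) t,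
      ⟨⟨(min_le_left _ _).trans (hmin₁ _), hmax₁ _⟩, trivial⟩⟩)
    (fun t => ⟨dz_sol h₂ hsm₂ _ _ _ b₂ (fun t => by linarith [hode₂ t]) t,
      ⟨⟨(min_le_right _ _).trans (hmin₂ _), (hmax₂ _).trans hM.ge⟩, trivial⟩⟩)
    (by simp [hM, hd₁, hd₂])
  refine ⟨b₁ - b₂, fun t => ?_⟩
  have h := congrArg Prod.fst (congrFun key (t - b₂))
  simp only [sub_add_cancel] at h
  rw [← h]
  congr 1
  ring
end

section
/- Let n ≥ 3 be an integer, g(u) = u - u^(1-4/n) for u > 0, and G(u) = u²/2 - (n/(2n-4)) u^(2-4/n) + 1/(n-2) (so that G' = g and G(1) = 0). If f : ℝ → ℝ is a nonconstant positive periodic solution of f'' - f^(1-4/n) + f = 0, then its constant energy c = (1/2) f'² + G(f) satisfies 0 < c < 1/(n-2). Conversely, for every c with 0 < c < 1/(n-2) there exists a nonconstant positive periodic solution of f'' - f^(1-4/n) + f = 0 with energy c. -/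
open Real

/-- The antiderivative `G(u) = u²/2 - (n/(2n-4)) u^(2-4/n) + 1/(n-2)` of
`g(u) = u - u^(1-4/n)` vanishing at `u = 1`. -/
noncomputable def derdzG (n : ℕ) (u : ℝ) : ℝ :=
  u ^ 2 / 2 - ((n : ℝ) / (2 * (n : ℝ) - 4)) * u ^ (2 - 4 / (n : ℝ)) + 1 / ((n : ℝ) - 2)




lemma exists_global_sol {E : Type*} [NormedAddCommGroup E] [NormedSpace ℝ E] [CompleteSpace E]
    (F : E → E) (K : NNReal) (hF : LipschitzWith K F) (L : NNReal) (hL : ∀ x, ‖F x‖ ≤ L) (x₀ : E) :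
    ∃ α : ℝ → E, α 0 = x₀ ∧ ∀ t, HasDerivAt α (F (α t)) t := by
  have loc : ∀ N : ℕ, ∃ α : ℝ → E, α 0 = x₀ ∧
      ∀ t ∈ Set.Ioo (-(N + 1 : ℝ)) (N + 1 : ℝ), HasDerivAt α (F (α t)) t := by
    intro N
    have hN : (0:ℝ) ≤ N + 1 := by positivity
    have h0 : (0:ℝ) ∈ Set.Icc (-(N + 1 : ℝ)) (N + 1 : ℝ) := ⟨by linarith, hN⟩
    have hp : IsPicardLindelof (fun _ ↦ F) (⟨0, h0⟩ : Set.Icc (-(N + 1 : ℝ)) (N + 1 : ℝ)) x₀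
        (L * (N + 1)) 0 L K := by
      apply IsPicardLindelof.of_time_independent
      · intro x _
        exact hL x
      · exact hF.lipschitzOnWith
      · simp
    obtain ⟨α, h1, h2⟩ := hp.exists_eq_forall_mem_Icc_hasDerivWithinAt₀
    exact ⟨α, h1, fun t ht => (h2 t (Set.Ioo_subset_Icc_self ht)).hasDerivAt
      (Icc_mem_nhds ht.1 ht.2)⟩
  choose α h0 hα using loc
  have agree : ∀ M N : ℕ, M ≤ N → ∀ t ∈ Set.Ioo (-(M + 1 : ℝ)) (M + 1 : ℝ), α M t = α N t := by
    intro M N hMN t ht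
    have hMN' : (M:ℝ) ≤ N := by exact_mod_cast hMN
    have hM : (0:ℝ) ≤ M := by positivity
    refine ODE_solution_unique_of_mem_Ioo (v := fun _ => F) (s := fun _ => Set.univ) (K := K)
      (t₀ := 0) (fun t _ => hF.lipschitzOnWith) ⟨by linarith, by linarith⟩
      (fun t ht => ⟨hα M t ht, trivial⟩)
      (fun t ht => ⟨hα N t ⟨by linarith [ht.1], by linarith [ht.2]⟩, trivial⟩) ?_ ht
    rw [h0, h0]
  have key : ∀ (N : ℕ) (s : ℝ), s ∈ Set.Ioo (-(N + 1 : ℝ)) (N + 1 : ℝ) →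
      α ⌈|s|⌉₊ s = α N s := by
    intro N s hs
    have h1 := Nat.le_ceil |s|
    have h2 := abs_le.1 h1
    have h3 : s ∈ Set.Ioo (-((⌈|s|⌉₊:ℕ) + 1 : ℝ)) ((⌈|s|⌉₊:ℕ) + 1 : ℝ) :=
      ⟨by linarith [h2.1], by linarith [h2.2]⟩
    rcases le_total ⌈|s|⌉₊ N with h | h
    · exact agree _ _ h s h3
    · exact (agree _ _ h s hs).symm
  refine ⟨fun s => α ⌈|s|⌉₊ s, by simpa using h0 0, fun t => ?_⟩
  have h1 := Nat.le_ceil |t|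
  have h2 := abs_le.1 h1
  have h3 : t ∈ Set.Ioo (-((⌈|t|⌉₊:ℕ) + 1 : ℝ)) ((⌈|t|⌉₊:ℕ) + 1 : ℝ) :=
    ⟨by linarith [h2.1], by linarith [h2.2]⟩
  refine (hα ⌈|t|⌉₊ t h3).congr_of_eventuallyEq ?_
  filter_upwards [Ioo_mem_nhds h3.1 h3.2] with s hs
  exact key _ s hs

lemma well_potential (φ Φ₀ : ℝ → ℝ) (l z r e : ℝ) (hlz : l < z) (hzr : z < r)
    (hc : Continuous φ) (hneg : ∀ x < z, φ x < 0) (hpos : ∀ x > z, 0 < φ x)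
    (hd : ∀ x ∈ Set.Icc l r, HasDerivAt Φ₀ (φ x) x) (hz : Φ₀ z = 0) (hl : Φ₀ l = e)
    (hr : Φ₀ r = e) :
    ∃ Φ : ℝ → ℝ, (∀ x, HasDerivAt Φ (φ x) x) ∧ Φ z = 0 ∧ Φ l = e ∧ (∀ x, 0 ≤ Φ x) ∧
      ∀ x, Φ x ≤ e → x ∈ Set.Icc l r := by
  have hD : ∀ x, HasDerivAt (fun y => ∫ s in z..y, φ s) (φ x) x := fun x =>
    intervalIntegral.integral_hasDerivAt_right (hc.intervalIntegrable _ _)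
      (hc.stronglyMeasurableAtFilter _ _) hc.continuousAt
  have heq : ∀ y ∈ Set.Icc l r, ∫ s in z..y, φ s = Φ₀ y := by
    intro y hy
    rw [intervalIntegral.integral_eq_sub_of_hasDerivAt (f := Φ₀) _ (hc.intervalIntegrable _ _),
      hz, sub_zero]
    intro x hx
    exact hd x (Set.uIcc_subset_Icc ⟨hlz.le, hzr.le⟩ hy hx)
  have h1 := heq l ⟨le_rfl, by linarith⟩
  have h2 := heq r ⟨by linarith, le_rfl⟩
  have h3 := heq z ⟨hlz.le, hzr.le⟩
  generalize hΦ : (fun y => ∫ s in z..y, φ s) = Φ at hD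
  have e1 : ∀ y, ∫ s in z..y, φ s = Φ y := fun y => by rw [← hΦ]
  rw [e1] at h1 h2 h3
  have hcont : Continuous Φ := continuous_iff_continuousAt.2 fun x => (hD x).continuousAt
  have anti : StrictAntiOn Φ (Set.Iic z) := by
    apply strictAntiOn_of_deriv_neg (convex_Iic z) hcont.continuousOn
    intro x hx
    rw [interior_Iic] at hx
    rw [(hD x).deriv]; exact hneg x hx
  have mono : StrictMonoOn Φ (Set.Ici z) := by
    apply strictMonoOn_of_deriv_pos (convex_Ici z) hcont.continuousOn
    intro x hx
    rw [interior_Ici] at hx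
    rw [(hD x).deriv]; exact hpos x hx
  refine ⟨Φ, hD, by rw [h3, hz], by rw [h1, hl], fun x => ?_, fun x hx => ⟨?_, ?_⟩⟩
  · rw [← hz, ← h3]
    rcases le_total x z with h | h
    · exact anti.antitoneOn h (Set.mem_Iic.2 le_rfl) h
    · exact mono.monotoneOn (Set.mem_Ici.2 le_rfl) h h
  · by_contra! h
    have := anti (Set.mem_Iic.2 (h.trans hlz).le) (Set.mem_Iic.2 hlz.le) h
    linarith
  · by_contra! h
    have := mono (Set.mem_Ici.2 hzr.le) (Set.mem_Ici.2 (hzr.trans h).le) h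
    linarith

lemma limit_deriv_zero (y y' : ℝ → ℝ) (l B : ℝ) (hy : ∀ t, HasDerivAt y (y' t) t)
    (hB : ∀ t, |y t| ≤ B) (hl : Filter.Tendsto y' Filter.atTop (nhds l)) : l = 0 := by
  have main : ∀ (y y' : ℝ → ℝ) (l : ℝ), (∀ t, HasDerivAt y (y' t) t) →
    (∀ t, |y t| ≤ B) → Filter.Tendsto y' Filter.atTop (nhds l) → ¬ 0 < l := by
    intro y y' l hy hB hl hpos
    obtain ⟨t₀, ht₀⟩ := Filter.eventually_atTop.1 (hl.eventually (lt_mem_nhds (half_lt_self hpos)))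
    have hB0 : 0 ≤ B := (abs_nonneg _).trans (hB 0)
    have hlt : t₀ < t₀ + (4 * B + 2) / l := by
      have : 0 < (4 * B + 2) / l := by positivity
      linarith
    obtain ⟨c, hc, hc'⟩ := exists_hasDerivAt_eq_slope y y' hlt
      (fun x _ => (hy x).continuousAt.continuousWithinAt) (fun x _ => hy x)
    have h1 := ht₀ c hc.1.le
    have h2 := abs_le.1 (hB t₀)
    have h3 := abs_le.1 (hB (t₀ + (4 * B + 2) / l))
    rw [hc', add_sub_cancel_left, lt_div_iff₀ (by positivity)] at h1
    have : l / 2 * ((4 * B + 2) / l) = 2 * B + 1 := by field_simp; ring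
    linarith [h2.1, h3.2]
  rcases lt_trichotomy l 0 with h | h | h
  · exact absurd (by linarith : 0 < -l)
      (main (fun t => - y t) (fun t => - y' t) (-l) (fun t => (hy t).neg)
        (fun t => by rw [abs_neg]; exact hB t) hl.neg)
  · exact h
  · exact absurd h (main y y' l hy hB hl)

lemma core_exists (g G : ℝ → ℝ) (a b c : ℝ) (ha : a < 1) (hb : 1 < b) (hc : 0 < c)
    (hG : ∀ x ∈ Set.Icc a b, HasDerivAt G (g x) x) (K : NNReal)
    (hgl : LipschitzOnWith K g (Set.Icc a b))
    (hneg : ∀ x ∈ Set.Icc a b, x < 1 → g x < 0) (hpos : ∀ x ∈ Set.Icc a b, 1 < x → 0 < g x)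
    (G1 : G 1 = 0) (Ga : G a = c) (Gb : G b = c) :
    ∃ x v : ℝ → ℝ, (∀ t, HasDerivAt x (v t) t) ∧ (∀ t, HasDerivAt v (-g (x t)) t) ∧
      (∀ t, x t ∈ Set.Icc a b) ∧ x 0 = a ∧ v 0 = 0 ∧
      (∀ t, (1 / 2) * (v t) ^ 2 + G (x t) = c) ∧ ∃ T : ℝ, 0 < T ∧ Function.Periodic x T := by
  set V := √(2 * c) with hV
  have hV0 : 0 < V := by positivity
  have hV2 : V ^ 2 / 2 = c := by rw [hV, Real.sq_sqrt (by positivity)]; ring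
  set cl : ℝ → ℝ := fun v => max (-V) (min V v) with hcl
  set ct : ℝ → ℝ := fun x => max a (min b x) with hct
  set φ : ℝ → ℝ := fun x => g (ct x) with hφ
  have clL : LipschitzWith 1 cl := (LipschitzWith.id.const_min V).const_max (-V)
  have ctL : LipschitzWith 1 ct := (LipschitzWith.id.const_min b).const_max a
  have ctm : ∀ x, ct x ∈ Set.Icc a b := fun x =>
    ⟨le_max_left _ _, max_le (by linarith) (min_le_left _ _)⟩
  have ctid : ∀ x ∈ Set.Icc a b, ct x = x := fun x hx => by
    simp only [hct]; rw [min_eq_right hx.2, max_eq_right hx.1]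
  have clid : ∀ x ∈ Set.Icc (-V) V, cl x = x := fun x hx => by
    simp only [hcl]; rw [min_eq_right hx.2, max_eq_right hx.1]
  have clodd : ∀ x, cl (-x) = - cl x := by
    intro x
    simp only [hcl]
    rcases le_total V x with h | h <;> rcases le_total V (-x) with h' | h' <;>
      simp only [min_def, max_def] <;> split_ifs <;> linarith
  have clb : ∀ x, |cl x| ≤ V := fun x =>
    abs_le.2 ⟨le_max_left _ _, max_le (by linarith) (min_le_left _ _)⟩
  have φL : LipschitzWith (K * 1) φ := by
    rw [← lipschitzOnWith_univ]
    exact hgl.comp ctL.lipschitzOnWith (fun x _ => ctm x)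
  obtain ⟨M, hM⟩ := isCompact_Icc.exists_bound_of_continuousOn hgl.continuousOn
  obtain ⟨P, hP, P0, PV, Pnn, Pw⟩ := well_potential cl (fun v => v ^ 2 / 2) (-V) 0 V c
    (by linarith) hV0 clL.continuous
    (fun x hx => max_lt (by linarith) ((min_le_right _ _).trans_lt hx))
    (fun x hx => lt_max_of_lt_right (lt_min hV0 hx))
    (fun x hx => by
      rw [clid x hx]
      have := ((hasDerivAt_id x).pow 2).div_const 2
      simpa using this) (by simp) (by simpa using hV2) hV2
  obtain ⟨Q, hQ, Q1, Qa, Qnn, Qw⟩ := well_potential φ G a 1 b c ha hb φL.continuous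
    (fun x hx => hneg _ (ctm x) (max_lt ha ((min_le_right _ _).trans_lt hx)))
    (fun x hx => hpos _ (ctm x) (lt_max_of_lt_right (lt_min hb hx)))
    (fun x hx => by simp only [hφ]; rw [ctid x hx]; exact hG x hx) G1 Ga Gb
  set F : ℝ × ℝ → ℝ × ℝ := fun p => (cl p.2, - φ p.1) with hF
  have FL : LipschitzWith (max (1 * 1) (K * 1 * 1)) F :=
    (clL.comp LipschitzWith.prod_snd).prodMk (φL.comp LipschitzWith.prod_fst).neg
  obtain ⟨α, α0, hα⟩ := exists_global_sol F _ FL (max V M).toNNReal (by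
    intro p
    rw [Real.coe_toNNReal _ (le_max_of_le_left hV0.le), Prod.norm_def]
    apply max_le_max
    · exact clb _
    · rw [norm_neg]; exact hM _ (ctm _)) (a, 0)
  have hx' : ∀ t, HasDerivAt (fun t => (α t).1) (cl (α t).2) t := fun t =>
    (ContinuousLinearMap.fst ℝ ℝ ℝ).hasFDerivAt.comp_hasDerivAt t (hα t)
  have hv' : ∀ t, HasDerivAt (fun t => (α t).2) (- φ (α t).1) t := fun t =>
    (ContinuousLinearMap.snd ℝ ℝ ℝ).hasFDerivAt.comp_hasDerivAt t (hα t)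
  have en : ∀ t, P (α t).2 + Q (α t).1 = c := by
    have hd : ∀ t, HasDerivAt (fun t => P (α t).2 + Q (α t).1) 0 t := by
      intro t
      have := ((hP (α t).2).comp t (hv' t)).add ((hQ (α t).1).comp t (hx' t))
      exact this.congr_deriv (by ring)
    intro t
    have := is_const_of_deriv_eq_zero (fun t => (hd t).differentiableAt) (fun t => (hd t).deriv) t 0
    rw [this, α0]
    simp only
    rw [P0, Qa, zero_add]
  have hxm : ∀ t, (α t).1 ∈ Set.Icc a b := fun t => Qw _ (by linarith [en t, Pnn (α t).2])
  have hvm : ∀ t, (α t).2 ∈ Set.Icc (-V) V := fun t => Pw _ (by linarith [en t, Qnn (α t).1])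
  have refl : ∀ τ, (α τ).2 = 0 → ∀ t, (α (2 * τ - t)).1 = (α t).1 := by
    intro τ hτ t
    have hr : ∀ t : ℝ, HasDerivAt (fun t => 2 * τ - t) (-1) t := fun t => by
      simpa using (hasDerivAt_id t).const_sub (2 * τ)
    have := ODE_solution_unique_univ (v := fun _ => F) (s := fun _ => Set.univ)
      (f := fun t => ((α (2 * τ - t)).1, - (α (2 * τ - t)).2)) (g := α) (t₀ := τ)
      (fun _ => FL.lipschitzOnWith) (fun t => ⟨by
        have h1 := (hx' (2 * τ - t)).comp t (hr t)
        have h2 := ((hv' (2 * τ - t)).comp t (hr t)).neg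
        have h3 := h1.prodMk h2
        refine h3.congr_deriv (Prod.ext ?_ ?_)
        · simp [hF, clodd]
        · simp [hF], trivial⟩) (fun t => ⟨hα t, trivial⟩) (by
        have : 2 * τ - τ = τ := by ring
        simp only [this]
        ext <;> simp [hτ])
    exact (Prod.ext_iff.1 (congrFun this t)).1
  have hx : ∀ t, HasDerivAt (fun t => (α t).1) (α t).2 t := fun t => by
    have := hx' t
    rwa [clid _ (hvm t)] at this
  have hv : ∀ t, HasDerivAt (fun t => (α t).2) (- g (α t).1) t := fun t => by
    have := hv' t
    simp only [hφ] at this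
    rwa [ctid _ (hxm t)] at this
  have en2 : ∀ t, (1 / 2) * (α t).2 ^ 2 + G (α t).1 = c := by
    have hd : ∀ t, HasDerivAt (fun t => (1 / 2) * (α t).2 ^ 2 + G (α t).1) 0 t := by
      intro t
      have := (((hv t).pow 2).const_mul (1 / 2)).add ((hG _ (hxm t)).comp t (hx t))
      exact this.congr_deriv (by simp; ring)
    intro t
    have := is_const_of_deriv_eq_zero (fun t => (hd t).differentiableAt) (fun t => (hd t).deriv) t 0
    rw [this, α0]
    simp [Ga]
  have xcont : Continuous fun t => (α t).1 :=
    continuous_iff_continuousAt.2 fun t => (hx t).continuousAt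
  have vcont : Continuous fun t => (α t).2 :=
    continuous_iff_continuousAt.2 fun t => (hv t).continuousAt
  have exT : ∃ T > 0, (α T).2 = 0 := by
    by_contra! hne
    have sgn : (∀ t > 0, 0 < (α t).2) ∨ (∀ t > 0, (α t).2 < 0) := by
      by_contra! h
      obtain ⟨⟨s, hs, hs'⟩, ⟨t, ht, ht'⟩⟩ := h
      obtain ⟨u, hu, hu'⟩ := isPreconnected_Ioi.intermediate_value (s := Set.Ioi (0:ℝ))
        (f := fun t => (α t).2) hs ht vcont.continuousOn ⟨hs', ht'⟩
      exact hne u hu hu'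
    have gcontb : ContinuousOn g (Set.Icc a b) := hgl.continuousOn
    have contr : ∀ (L : ℝ) (σ : ℝ), σ ≠ 0 → (∀ t > 0, (α t).2 = σ * |(α t).2|) →
        Filter.Tendsto (fun t => (α t).1) Filter.atTop (nhds L) → False := by
      intro L σ hσ hs hL
      have hLm : L ∈ Set.Icc a b := isClosed_Icc.mem_of_tendsto hL (Filter.Eventually.of_forall hxm)
      have h1 : Filter.Tendsto (fun t => - φ (α t).1) Filter.atTop (nhds (- φ L)) :=
        ((φL.continuous.tendsto L).comp hL).neg
      have h2 := limit_deriv_zero (fun t => (α t).2) _ _ V hv' (fun t => abs_le.2 (hvm t)) h1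
      have h3 : g L = 0 := by
        simp only [hφ] at h2
        rw [ctid L hLm] at h2
        linarith
      have hL1 : L = 1 := by
        rcases lt_trichotomy L 1 with h | h | h
        · exact absurd h3 (hneg L hLm h).ne
        · exact h
        · exact absurd h3 (hpos L hLm h).ne'
      subst hL1
      have h4 : Filter.Tendsto (fun t => G (α t).1) Filter.atTop (nhds 0) := by
        rw [← G1]
        exact (hG 1 hLm).continuousAt.tendsto.comp hL
      have h5 : Filter.Tendsto (fun t => σ * √(2 * (c - G (α t).1))) Filter.atTop
          (nhds (σ * √(2 * (c - 0)))) :=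
        ((h4.const_sub c).const_mul 2).sqrt.const_mul σ
      have h6 : Filter.Tendsto (fun t => (α t).2) Filter.atTop (nhds (σ * √(2 * (c - 0)))) := by
        refine h5.congr' ?_
        filter_upwards [Filter.eventually_gt_atTop 0] with t ht
        rw [hs t ht]
        have : 2 * (c - G (α t).1) = (α t).2 ^ 2 := by linarith [en2 t]
        rw [this, Real.sqrt_sq_eq_abs]
      have h7 := limit_deriv_zero (fun t => (α t).1) _ _ (max |a| |b|) hx
        (fun t => abs_le_max_abs_abs (hxm t).1 (hxm t).2) h6
      rw [sub_zero, ← hV] at h7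
      rcases mul_eq_zero.1 h7 with h | h
      · exact hσ h
      · exact hV0.ne' h
    rcases sgn with h | h
    · have mono : Monotone fun t : ℝ => (α (max t 0)).1 := by
        have : MonotoneOn (fun t => (α t).1) (Set.Ici 0) := by
          apply monotoneOn_of_deriv_nonneg (convex_Ici 0) xcont.continuousOn
            (fun t _ => (hx t).differentiableAt.differentiableWithinAt)
          intro t ht
          rw [interior_Ici] at ht
          rw [(hx t).deriv]
          exact (h t ht).le
        intro s t hst
        exact this (Set.mem_Ici.2 (le_max_right _ _)) (Set.mem_Ici.2 (le_max_right _ _))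
          (max_le_max_right 0 hst)
      have hlim := tendsto_atTop_ciSup mono ⟨b, by rintro _ ⟨t, rfl⟩; exact (hxm _).2⟩
      refine contr _ 1 one_ne_zero (fun t ht => by rw [abs_of_pos (h t ht), one_mul])
        (hlim.congr' ?_)
      filter_upwards [Filter.eventually_gt_atTop 0] with t ht
      rw [max_eq_left ht.le]
    · have anti : Antitone fun t : ℝ => (α (max t 0)).1 := by
        have : AntitoneOn (fun t => (α t).1) (Set.Ici 0) := by
          apply antitoneOn_of_deriv_nonpos (convex_Ici 0) xcont.continuousOn
            (fun t _ => (hx t).differentiableAt.differentiableWithinAt)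
          intro t ht
          rw [interior_Ici] at ht
          rw [(hx t).deriv]
          exact (h t ht).le
        intro s t hst
        exact this (Set.mem_Ici.2 (le_max_right _ _)) (Set.mem_Ici.2 (le_max_right _ _))
          (max_le_max_right 0 hst)
      have hlim := tendsto_atTop_ciInf anti ⟨a, by rintro _ ⟨t, rfl⟩; exact (hxm _).1⟩
      refine contr _ (-1) (by norm_num) (fun t ht => by rw [abs_of_neg (h t ht)]; ring)
        (hlim.congr' ?_)
      filter_upwards [Filter.eventually_gt_atTop 0] with t ht
      rw [max_eq_left ht.le]
  obtain ⟨T, hT, hT0⟩ := exT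
  refine ⟨fun t => (α t).1, fun t => (α t).2, hx, hv, hxm, by simp [α0], by simp [α0], en2,
    2 * T, by linarith, fun t => ?_⟩
  have h1 := refl T hT0 (t + 2 * T)
  have h2 := refl 0 (by simp [α0]) t
  simp only
  rw [← h1, ← h2]
  congr 2
  ring

lemma dG_exp_pos (n : ℕ) (hn : 3 ≤ n) : 0 < 2 - 4 / (n : ℝ) := by
  have h : (3:ℝ) ≤ n := by exact_mod_cast hn
  rw [sub_pos, div_lt_iff₀ (by linarith)]
  linarith

lemma dG_hasDerivAt (n : ℕ) (hn : 3 ≤ n) (u : ℝ) (hu : 0 < u) :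
    HasDerivAt (derdzG n) (u - u ^ (1 - 4 / (n : ℝ))) u := by
  have h : (3:ℝ) ≤ n := by exact_mod_cast hn
  have h1 : HasDerivAt (fun u : ℝ => u ^ 2 / 2) u u := by
    simpa using ((hasDerivAt_id u).pow 2).div_const 2
  have h2 := (Real.hasDerivAt_rpow_const (p := 2 - 4 / (n : ℝ)) (Or.inl hu.ne')).const_mul
    ((n : ℝ) / (2 * (n : ℝ) - 4))
  have h3 := (h1.sub h2).add_const (1 / ((n : ℝ) - 2))
  refine h3.congr_deriv ?_
  have e : 2 - 4 / (n : ℝ) - 1 = 1 - 4 / (n:ℝ) := by ring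
  rw [e, ← mul_assoc]
  have h4 : (n : ℝ) ≠ 0 := by linarith
  have h5 : 2 * (n : ℝ) - 4 ≠ 0 := by linarith
  have h6 : (n : ℝ) / (2 * (n : ℝ) - 4) * (2 - 4 / (n : ℝ)) = 1 := by
    have : 2 - 4 / (n : ℝ) = (2 * n - 4) / n := by field_simp
    rw [this, div_mul_div_cancel₀ h5, div_self h4]
  rw [h6, one_mul]

lemma dG_neg (n : ℕ) (hn : 3 ≤ n) (u : ℝ) (hu : 0 < u) (h1 : u < 1) :
    u - u ^ (1 - 4 / (n : ℝ)) < 0 := by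
  have h : (3:ℝ) ≤ n := by exact_mod_cast hn
  have h2 : 0 < 4 / (n:ℝ) := by positivity
  have := Real.rpow_lt_rpow_of_exponent_gt hu h1 (by linarith : 1 - 4 / (n:ℝ) < 1)
  rw [Real.rpow_one] at this
  linarith

lemma dG_pos (n : ℕ) (hn : 3 ≤ n) (u : ℝ) (h1 : 1 < u) :
    0 < u - u ^ (1 - 4 / (n : ℝ)) := by
  have h : (3:ℝ) ≤ n := by exact_mod_cast hn
  have h2 : 0 < 4 / (n:ℝ) := by positivity
  have := Real.rpow_lt_rpow_of_exponent_lt h1 (by linarith : 1 - 4 / (n:ℝ) < 1)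
  rw [Real.rpow_one] at this
  linarith

lemma dG_cont (n : ℕ) (hn : 3 ≤ n) : Continuous (derdzG n) := by
  have := Real.continuous_rpow_const (dG_exp_pos n hn).le
  unfold derdzG
  fun_prop

lemma dG_zero (n : ℕ) (hn : 3 ≤ n) : derdzG n 0 = 1 / ((n:ℝ) - 2) := by
  simp [derdzG, Real.zero_rpow (dG_exp_pos n hn).ne']

lemma dG_one (n : ℕ) (hn : 3 ≤ n) : derdzG n 1 = 0 := by
  have h : (3:ℝ) ≤ n := by exact_mod_cast hn
  have h5 : (n : ℝ) - 2 ≠ 0 := by linarith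
  have h6 : 2 * (n : ℝ) - 4 = 2 * (n - 2) := by ring
  simp only [derdzG, Real.one_rpow, h6]
  field_simp
  ring

lemma dG_anti (n : ℕ) (hn : 3 ≤ n) : StrictAntiOn (derdzG n) (Set.Icc 0 1) := by
  apply strictAntiOn_of_deriv_neg (convex_Icc 0 1) (dG_cont n hn).continuousOn
  intro x hx
  rw [interior_Icc] at hx
  rw [(dG_hasDerivAt n hn x hx.1).deriv]
  exact dG_neg n hn x hx.1 hx.2

lemma dG_mono (n : ℕ) (hn : 3 ≤ n) : StrictMonoOn (derdzG n) (Set.Ici 1) := by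
  apply strictMonoOn_of_deriv_pos (convex_Ici 1) (dG_cont n hn).continuousOn
  intro x hx
  rw [interior_Ici] at hx
  rw [(dG_hasDerivAt n hn x (zero_lt_one.trans hx)).deriv]
  exact dG_pos n hn x hx

lemma dG_nonneg (n : ℕ) (hn : 3 ≤ n) (u : ℝ) (hu : 0 < u) (h : derdzG n u ≤ 0) : u = 1 := by
  rcases lt_trichotomy u 1 with h1 | h1 | h1
  · have := dG_anti n hn ⟨hu.le, h1.le⟩ ⟨zero_le_one, le_rfl⟩ h1
    rw [dG_one n hn] at this; linarith
  · exact h1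
  · have := dG_mono n hn (Set.mem_Ici.2 le_rfl) (Set.mem_Ici.2 h1.le) h1
    rw [dG_one n hn] at this; linarith

lemma dG_big (n : ℕ) (hn : 3 ≤ n) : ∃ B : ℝ, 1 < B ∧ derdzG n B = 1 / ((n:ℝ) - 2) := by
  have h : (3:ℝ) ≤ n := by exact_mod_cast hn
  have h5 : 0 < (n : ℝ) - 2 := by linarith
  set k := (n:ℝ) / (n - 2) with hk
  have hk1 : 1 < k := by rw [hk, lt_div_iff₀ h5]; linarith
  refine ⟨k ^ ((n:ℝ) / 4), Real.one_lt_rpow hk1 (by positivity), ?_⟩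
  set B := k ^ ((n:ℝ) / 4) with hB
  have hB0 : 0 < B := by positivity
  have e1 : B ^ (4 / (n:ℝ)) = k := by
    rw [hB, ← Real.rpow_mul (by positivity)]
    have : (n:ℝ) / 4 * (4 / n) = 1 := by field_simp
    rw [this, Real.rpow_one]
  have e2 : B ^ (2 - 4 / (n:ℝ)) = B ^ 2 / k := by
    rw [Real.rpow_sub hB0, e1]; norm_num
  have e3 : (n:ℝ) / (2 * n - 4) = k / 2 := by
    have h6 : 2 * (n : ℝ) - 4 = 2 * (n - 2) := by ring
    rw [hk, h6]; field_simp
  simp only [derdzG]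
  rw [e2, e3]
  field_simp
  ring

theorem normalized_equation_energy_range (n : ℕ) (hn : 3 ≤ n) :
    (∀ (f : ℝ → ℝ) (c : ℝ),
      ContDiff ℝ 2 f →
      (∀ t, 0 < f t) →
      (∃ T : ℝ, 0 < T ∧ Function.Periodic f T) →
      (¬ ∃ a : ℝ, ∀ t, f t = a) →
      (∀ t, deriv (deriv f) t - f t ^ (1 - 4 / (n : ℝ)) + f t = 0) →
      (∀ t, (1 / 2) * (deriv f t) ^ 2 + derdzG n (f t) = c) →
      0 < c ∧ c < 1 / ((n : ℝ) - 2)) ∧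
    (∀ c : ℝ, 0 < c → c < 1 / ((n : ℝ) - 2) →
      ∃ f : ℝ → ℝ,
        ContDiff ℝ 2 f ∧
        (∀ t, 0 < f t) ∧
        (∃ T : ℝ, 0 < T ∧ Function.Periodic f T) ∧
        (¬ ∃ a : ℝ, ∀ t, f t = a) ∧
        (∀ t, deriv (deriv f) t - f t ^ (1 - 4 / (n : ℝ)) + f t = 0) ∧
        (∀ t, (1 / 2) * (deriv f t) ^ 2 + derdzG n (f t) = c)) := by
  constructor
  · rintro f c hf hpos ⟨T, hT, hper⟩ hnc _ hen
    have hc0 : 0 < c := by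
      by_contra! h
      exact hnc ⟨1, fun t => dG_nonneg n hn _ (hpos t)
        (by nlinarith [hen t, sq_nonneg (deriv f t)])⟩
    refine ⟨hc0, ?_⟩
    have hfc := hf.continuous
    have hne : (Set.Icc 0 (0 + T)).Nonempty := ⟨0, le_rfl, by linarith⟩
    obtain ⟨p, _, hp⟩ := isCompact_Icc.exists_isMinOn hne hfc.continuousOn
    obtain ⟨q, _, hq⟩ := isCompact_Icc.exists_isMaxOn hne hfc.continuousOn
    have red : ∀ t, ∃ s ∈ Set.Icc 0 (0 + T), f t = f s := fun t => by
      obtain ⟨s, hs, hs'⟩ := hper.exists_mem_Ico₀ hT t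
      exact ⟨s, ⟨hs.1, by linarith [hs.2]⟩, hs'⟩
    have hp' : ∀ t, f p ≤ f t := fun t => by
      obtain ⟨s, hs, hs'⟩ := red t
      rw [hs']; exact hp hs
    have hq' : ∀ t, f t ≤ f q := fun t => by
      obtain ⟨s, hs, hs'⟩ := red t
      rw [hs']; exact hq hs
    have dp : deriv f p = 0 :=
      IsLocalMin.deriv_eq_zero (Filter.Eventually.of_forall hp')
    have dq : deriv f q = 0 :=
      IsLocalMax.deriv_eq_zero (Filter.Eventually.of_forall hq')
    have ep := hen p
    have eq := hen q
    rw [dp] at ep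
    rw [dq] at eq
    have hlt : f p < f q := by
      by_contra! h
      exact hnc ⟨f p, fun t => le_antisymm ((hq' t).trans h) (hp' t)⟩
    have hp1 : f p < 1 := by
      by_contra! h
      have := dG_mono n hn (Set.mem_Ici.2 h) (Set.mem_Ici.2 (h.trans hlt.le)) hlt
      linarith
    have := dG_anti n hn ⟨le_rfl, zero_le_one⟩ ⟨(hpos p).le, hp1.le⟩ (hpos p)
    rw [dG_zero n hn] at this
    linarith
  · intro c hc0 hc1
    obtain ⟨B, hB1, hB⟩ := dG_big n hn
    have hGc := dG_cont n hn
    obtain ⟨a, ⟨ha0, ha1⟩, ha⟩ := intermediate_value_Ioo' zero_le_one hGc.continuousOn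
      (show c ∈ Set.Ioo (derdzG n 1) (derdzG n 0) by
        rw [dG_zero n hn, dG_one n hn]; exact ⟨hc0, hc1⟩)
    obtain ⟨b, ⟨hb0, hb1⟩, hb⟩ := intermediate_value_Ioo hB1.le hGc.continuousOn
      (show c ∈ Set.Ioo (derdzG n 1) (derdzG n B) by
        rw [hB, dG_one n hn]; exact ⟨hc0, hc1⟩)
    have hposI : ∀ x ∈ Set.Icc a b, 0 < x := fun x hx => ha0.trans_le hx.1
    have hcd : ContDiffOn ℝ 1 (fun u : ℝ => u - u ^ (1 - 4 / (n : ℝ))) (Set.Icc a b) :=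
      contDiffOn_id.sub (contDiffOn_id.rpow_const_of_ne fun x hx => (hposI x hx).ne')
    obtain ⟨K, hK⟩ := hcd.exists_lipschitzOnWith one_ne_zero (convex_Icc a b) isCompact_Icc
    obtain ⟨x, v, hx, hv, hxm, x0, v0, en, T, hT, hper⟩ := core_exists
      (fun u : ℝ => u - u ^ (1 - 4 / (n : ℝ))) (derdzG n) a b c ha1 hb0 hc0
      (fun x hx => dG_hasDerivAt n hn x (hposI x hx)) K hK
      (fun x hx h => dG_neg n hn x (hposI x hx) h) (fun x _ h => dG_pos n hn x h)
      (dG_one n hn) ha hb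
    have dx : deriv x = v := funext fun t => (hx t).deriv
    have dv : deriv v = fun t => -(x t - x t ^ (1 - 4 / (n : ℝ))) := funext fun t => (hv t).deriv
    have xc : Continuous x := continuous_iff_continuousAt.2 fun t => (hx t).continuousAt
    have gc : Continuous fun t => -(x t - x t ^ (1 - 4 / (n : ℝ))) :=
      (xc.sub (xc.rpow_const fun t => Or.inl (hposI _ (hxm t)).ne')).neg
    refine ⟨x, ?_, fun t => hposI _ (hxm t), ⟨T, hT, hper⟩, ?_, ?_, ?_⟩
    · have h1 : ContDiff ℝ 1 v := by
        rw [contDiff_one_iff_deriv, dv]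
        exact ⟨fun t => (hv t).differentiableAt, gc⟩
      have : (2 : WithTop ℕ∞) = 1 + 1 := by norm_num
      rw [this, contDiff_succ_iff_deriv, dx]
      exact ⟨fun t => (hx t).differentiableAt, by simp, h1⟩
    · rintro ⟨d, hd⟩
      have hv0 : v = fun _ => 0 := by
        rw [← dx, show x = fun _ => d from funext hd]
        simp
      have h1 := congrFun dv 0
      rw [hv0, x0] at h1
      simp only [deriv_const] at h1
      linarith [dG_neg n hn a ha0 ha1]
    · intro t
      rw [dx, dv]
      ring
    · intro t
      rw [dx]
      exact en t
end

section
/- Let n ≥ 4 be an integer and g(u) = u - u^(1-4/n) for u > 0, so that g'(u) = 1 - (1-4/n) u^(-4/n) and g''(u) = (4/n)(1-4/n) u^(-1-4/n). Then for all u > 0 one has g''(u) ≥ 0 and Δ(u) := (u-1)·[g'(u) g''(1) - g'(1) g''(u)] ≥ 0. -/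
open Real

/-- For `n ≥ 4` and `g(u) = u - u^(1-4/n)` (so that
`g'(u) = 1 - (1-4/n) u^(-4/n)` and `g''(u) = (4/n)(1-4/n) u^(-1-4/n)`), for all `u > 0`
one has `g''(u) ≥ 0` and `Δ(u) = (u-1)[g'(u) g''(1) - g'(1) g''(u)] ≥ 0`. -/
theorem chow_wang_discriminant_nonneg
    (n : ℕ) (hn : 4 ≤ n) (u : ℝ) (hu : 0 < u) :
    0 ≤ (4 / (n : ℝ)) * (1 - 4 / (n : ℝ)) * u ^ (-1 - 4 / (n : ℝ)) ∧
    0 ≤ (u - 1) *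
      ((1 - (1 - 4 / (n : ℝ)) * u ^ (-(4 / (n : ℝ)))) * ((4 / (n : ℝ)) * (1 - 4 / (n : ℝ)))
        - (4 / (n : ℝ)) * ((4 / (n : ℝ)) * (1 - 4 / (n : ℝ)) * u ^ (-1 - 4 / (n : ℝ)))) := by
  have hn' : (4 : ℝ) ≤ n := by exact_mod_cast hn
  have ha : 0 < 4 / (n : ℝ) := by positivity
  have ha1 : 4 / (n : ℝ) ≤ 1 := by
    rw [div_le_one (by linarith)]
    exact hn'
  generalize 4 / (n : ℝ) = a at ha ha1
  have hb : 0 ≤ 1 - a := by linarith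
  have hc : 0 ≤ a * (1 - a) := mul_nonneg ha.le hb
  refine ⟨mul_nonneg hc (rpow_nonneg hu.le _), ?_⟩
  have key : 0 ≤ (u - 1) * ((1 - a) * (1 - u ^ (-a)) + a * (1 - u ^ (-1 - a))) := by
    rcases le_total 1 u with h | h
    · have hp : u ^ (-a) ≤ 1 := rpow_le_one_of_one_le_of_nonpos h (by linarith)
      have hq : u ^ (-1 - a) ≤ 1 := rpow_le_one_of_one_le_of_nonpos h (by linarith)
      exact mul_nonneg (by linarith) (add_nonneg (mul_nonneg hb (by linarith))
        (mul_nonneg ha.le (by linarith)))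
    · have hp : 1 ≤ u ^ (-a) := one_le_rpow_of_pos_of_le_one_of_nonpos hu h (by linarith)
      have hq : 1 ≤ u ^ (-1 - a) := one_le_rpow_of_pos_of_le_one_of_nonpos hu h (by linarith)
      exact mul_nonneg_of_nonpos_of_nonpos (by linarith)
        (add_nonpos (mul_nonpos_of_nonneg_of_nonpos hb (by linarith))
          (mul_nonpos_of_nonneg_of_nonpos ha.le (by linarith)))
  have := mul_nonneg hc key
  linarith
end

section
/- Let n ≥ 5 be an integer, g(u) = u - u^(1-4/n) for u > 0, and G(u) = u²/2 - (n/(2n-4)) u^(2-4/n) + 1/(n-2) (so G' = g and G(1) = 0). Then for every u > 0 with u ≠ 1 one has H(u) := g(u)² - 2 G(u) g'(u) + (g''(1)/(3 g'(1)²)) g(u)³ > 0, where g'(1) = 4/n and g''(1) = (4/n)(1-4/n). -/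
open Real

/-- The function `g(u) = u - u^(1-4/n)`. -/
noncomputable def derdzg (n : ℕ) (u : ℝ) : ℝ :=
  u - u ^ (1 - 4 / (n : ℝ))

/-- Mean value theorem, strict increase. -/
lemma cw_incr (f f' : ℝ → ℝ) (hf : ∀ x, 0 < x → HasDerivAt f (f' x) x) (p q : ℝ) (hp : 0 < p)
    (hpq : p < q) (h : ∀ x, p < x → x < q → 0 < f' x) : f p < f q := by
  obtain ⟨c, hc, he⟩ := exists_hasDerivAt_eq_slope f f' hpq
    (fun x hx => (hf x (lt_of_lt_of_le hp hx.1)).continuousAt.continuousWithinAt)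
    (fun x hx => hf x (lt_trans hp hx.1))
  have h1 := h c hc.1 hc.2
  rw [he] at h1
  have h2 : 0 < q - p := sub_pos.2 hpq
  have := (div_pos_iff_of_pos_right h2).1 h1
  linarith

/-- Mean value theorem, strict decrease. -/
lemma cw_decr (f f' : ℝ → ℝ) (hf : ∀ x, 0 < x → HasDerivAt f (f' x) x) (p q : ℝ) (hp : 0 < p)
    (hpq : p < q) (h : ∀ x, p < x → x < q → f' x < 0) : f q < f p := by
  have := cw_incr (fun x => - f x) (fun x => - f' x) (fun x hx => (hf x hx).neg) p q hp hpq
    (fun x h1 h2 => by have := h x h1 h2; linarith)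
  linarith

/-- The potential. -/
noncomputable def cwG (a x : ℝ) : ℝ :=
  x ^ 2 / 2 - x ^ 2 / x ^ a / (2 - a) + a / (2 * (2 - a))

/-- The criterion function. -/
noncomputable def cwH (a x : ℝ) : ℝ :=
  (x - x / x ^ a) ^ 2 - 2 * cwG a x * (1 - (1 - a) / x ^ a)
    + (1 - a) / (3 * a) * (x - x / x ^ a) ^ 3

/-- Rescaled derivative of `cwH`. -/
noncomputable def cwK (a x : ℝ) : ℝ :=
  x * x ^ a * (x - x / x ^ a) ^ 2 * (1 - (1 - a) / x ^ a) - 2 * a ^ 2 * cwG a x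

/-- Derivative of `cwK` divided by `g`. -/
noncomputable def cwL (a x : ℝ) : ℝ :=
  (3 + a) * (x * x ^ a) - (6 - 4 * a) * x + (1 - a) * (3 - 2 * a) * (x / x ^ a) - 2 * a ^ 2

/-- Derivative of `cwL`, as a function of `x ^ a`. -/
noncomputable def cwM (a w : ℝ) : ℝ :=
  (1 + a) * (3 + a) * w - (6 - 4 * a) + (1 - a) ^ 2 * (3 - 2 * a) / w

lemma cw_W (a x : ℝ) (hx : 0 < x) :
    HasDerivAt (fun y : ℝ => y ^ a) (a * x ^ a / x) x := by
  have h := Real.hasDerivAt_rpow_const (p := a) (Or.inl hx.ne')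
  rw [Real.rpow_sub_one hx.ne'] at h
  refine HasDerivAt.congr_deriv h ?_
  ring

lemma cw_V (a x : ℝ) (hx : 0 < x) :
    HasDerivAt (fun y : ℝ => y / y ^ a) ((1 - a) / x ^ a) x := by
  have hw := Real.rpow_pos_of_pos hx a
  have h := (hasDerivAt_id x).div (cw_W a x hx) hw.ne'
  refine HasDerivAt.congr_deriv h ?_
  simp only [id]
  field_simp

lemma cw_G' (a : ℝ) (h1 : a < 1) (x : ℝ) (hx : 0 < x) :
    HasDerivAt (cwG a) (x - x / x ^ a) x := by
  have hw := Real.rpow_pos_of_pos hx a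
  have h2 : (2 - a) ≠ 0 := by linarith
  have h := (((hasDerivAt_id x).pow 2).div_const 2).sub
    ((((hasDerivAt_id x).pow 2).div (cw_W a x hx) hw.ne').div_const (2 - a))
  have h := h.add_const (a / (2 * (2 - a)))
  refine HasDerivAt.congr_deriv h ?_
  simp only [id, Pi.pow_apply]
  field_simp
  ring

lemma cw_g' (a x : ℝ) (hx : 0 < x) :
    HasDerivAt (fun y : ℝ => y - y / y ^ a) (1 - (1 - a) / x ^ a) x :=
  (hasDerivAt_id x).sub (cw_V a x hx)

lemma cw_gg (a x : ℝ) (hx : 0 < x) :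
    HasDerivAt (fun y : ℝ => 1 - (1 - a) / y ^ a) (a * (1 - a) / (x * x ^ a)) x := by
  have hw := Real.rpow_pos_of_pos hx a
  have h := ((hasDerivAt_const x (1 - a)).div (cw_W a x hx) hw.ne').const_sub 1
  refine HasDerivAt.congr_deriv h ?_
  field_simp
  ring

lemma cw_H' (a : ℝ) (h0 : 0 < a) (h1 : a < 1) (x : ℝ) (hx : 0 < x) :
    HasDerivAt (cwH a) ((1 - a) / (a * (x * x ^ a)) * cwK a x) x := by
  have hw := Real.rpow_pos_of_pos hx a
  have h := (((cw_g' a x hx).pow 2).sub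
    (((cw_G' a h1 x hx).const_mul 2).mul (cw_gg a x hx))).add
    (((cw_g' a x hx).pow 3).const_mul ((1 - a) / (3 * a)))
  refine HasDerivAt.congr_deriv h ?_
  unfold cwK
  generalize cwG a x = G
  simp only [Nat.cast_ofNat, Nat.reduceSub, pow_one]
  field_simp
  ring

lemma cw_K' (a : ℝ) (h1 : a < 1) (x : ℝ) (hx : 0 < x) :
    HasDerivAt (cwK a) ((x - x / x ^ a) * cwL a x) x := by
  have hw := Real.rpow_pos_of_pos hx a
  have h := (((((hasDerivAt_id x).mul (cw_W a x hx)).mul ((cw_g' a x hx).pow 2)).mul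
    (cw_gg a x hx))).sub ((cw_G' a h1 x hx).const_mul (2 * a ^ 2))
  refine HasDerivAt.congr_deriv h ?_
  unfold cwL
  simp only [id, Nat.cast_ofNat, Nat.reduceSub, pow_one, Pi.mul_apply, Pi.pow_apply]
  field_simp
  ring

lemma cw_L' (a : ℝ) (x : ℝ) (hx : 0 < x) :
    HasDerivAt (cwL a) (cwM a (x ^ a)) x := by
  have hw := Real.rpow_pos_of_pos hx a
  have h := (((((hasDerivAt_id x).mul (cw_W a x hx)).const_mul (3 + a)).sub
    ((hasDerivAt_id x).const_mul (6 - 4 * a))).add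
    ((cw_V a x hx).const_mul ((1 - a) * (3 - 2 * a)))).sub_const (2 * a ^ 2)
  refine HasDerivAt.congr_deriv h ?_
  unfold cwM
  simp only [id]
  field_simp

lemma cw_M_mono (a : ℝ) (h0 : 0 < a) (h1 : a < 1) (w z : ℝ) (hw : 1 - a ≤ w) (hz : w < z) :
    cwM a w < cwM a z := by
  have hb : 0 < 1 - a := by linarith
  have hw0 : 0 < w := by linarith
  have hz0 : 0 < z := by linarith
  have e : cwM a z - cwM a w =
      (z - w) * ((1 + a) * (3 + a) * (w * z) - (1 - a) ^ 2 * (3 - 2 * a)) / (w * z) := by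
    unfold cwM; field_simp; ring
  have h2 : (1 - a) ^ 2 ≤ w * z := by nlinarith
  have h3 : 0 < (1 + a) * (3 + a) * (w * z) - (1 - a) ^ 2 * (3 - 2 * a) := by
    have : 0 < w * z := by positivity
    have : (1 - a) ^ 2 * (3 - 2 * a) ≤ w * z * (3 - 2 * a) :=
      mul_le_mul_of_nonneg_right h2 (by linarith)
    nlinarith [mul_pos h0 ‹0 < w * z›, mul_pos (mul_pos h0 h0) ‹0 < w * z›]
  have : 0 < cwM a z - cwM a w := by
    rw [e]
    exact div_pos (mul_pos (by linarith) h3) (by positivity)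
  linarith

lemma cw_M_one (a : ℝ) (h0 : 0 < a) (h1 : a < 1) : 0 < cwM a 1 := by
  have : cwM a 1 = a ^ 2 * (8 - 2 * a) := by unfold cwM; ring
  rw [this]
  exact mul_pos (by positivity) (by linarith)

lemma cw_L_one (a : ℝ) : cwL a 1 = 0 := by
  simp only [cwL, Real.one_rpow]; ring

lemma cw_G_one (a : ℝ) (h1 : a < 1) : cwG a 1 = 0 := by
  have h2 : (2 - a) ≠ 0 := by linarith
  simp only [cwG, Real.one_rpow]; field_simp; ring

lemma cw_K_one (a : ℝ) (h1 : a < 1) : cwK a 1 = 0 := by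
  simp only [cwK, cw_G_one a h1, Real.one_rpow]; ring

lemma cw_H_one (a : ℝ) (h1 : a < 1) : cwH a 1 = 0 := by
  simp only [cwH, cw_G_one a h1, Real.one_rpow]; ring

lemma cw_g_pos (a : ℝ) (h0 : 0 < a) (x : ℝ) (hx : 1 < x) : 0 < x - x / x ^ a := by
  have := div_lt_self (by linarith : 0 < x) (Real.one_lt_rpow hx h0)
  linarith

lemma cw_g_neg (a : ℝ) (h0 : 0 < a) (x : ℝ) (h : 0 < x) (hx : x < 1) : x - x / x ^ a < 0 := by
  have h2 := Real.rpow_lt_one h.le hx h0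
  have h3 := Real.rpow_pos_of_pos h a
  have : x < x / x ^ a := by
    rw [lt_div_iff₀ h3]; nlinarith
  linarith

lemma cw_L_pos (a : ℝ) (h0 : 0 < a) (h1 : a < 1) (x : ℝ) (hx : 1 < x) : 0 < cwL a x := by
  rw [← cw_L_one a]
  refine cw_incr _ _ (cw_L' a) 1 x one_pos hx (fun y hy _ => ?_)
  exact (cw_M_one a h0 h1).trans
    (cw_M_mono a h0 h1 1 _ (by linarith) (Real.one_lt_rpow hy h0))

lemma cw_L_crit (a : ℝ) (h0 : 0 < a) (h1 : a < 1) (x : ℝ) (hx : 0 < x) (h : x ^ a = 1 - a) :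
    cwL a x < 0 := by
  have hb : 1 - a ≠ 0 := by linarith
  have : cwL a x = - a ^ 2 * x - 2 * a ^ 2 := by
    unfold cwL; rw [h]; field_simp; ring
  rw [this]
  have := mul_pos (pow_pos h0 2) hx
  nlinarith [pow_pos h0 2]

lemma cw_L_neg (a : ℝ) (h0 : 0 < a) (h1 : a < 1) (x : ℝ) (h : 0 < x) (hx : x < 1)
    (hc : 1 - a ≤ x ^ a) : cwL a x < 0 := by
  have hb : 0 < 1 - a := by linarith
  rcases hc.eq_or_lt with hc' | hc'
  · exact cw_L_crit a h0 h1 x h hc'.symm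
  rcases le_or_gt 0 (cwM a (x ^ a)) with hM | hM
  · rw [← cw_L_one a]
    refine cw_incr _ _ (cw_L' a) x 1 h hx (fun y hy _ => ?_)
    exact lt_of_le_of_lt hM (cw_M_mono a h0 h1 _ _ hc (Real.rpow_lt_rpow h.le hy h0))
  · have hp : 0 < (1 - a) ^ a⁻¹ := Real.rpow_pos_of_pos hb _
    have he : ((1 - a) ^ a⁻¹) ^ a = 1 - a := Real.rpow_inv_rpow hb.le h0.ne'
    have hlt : (1 - a) ^ a⁻¹ < x := by
      rw [← Real.rpow_lt_rpow_iff hp.le h.le h0, he]; exact hc'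
    refine lt_trans ?_ (cw_L_crit a h0 h1 _ hp he)
    refine cw_decr _ _ (cw_L' a) _ x hp hlt (fun y hy hyx => ?_)
    refine lt_trans (cw_M_mono a h0 h1 _ _ ?_ (Real.rpow_lt_rpow (hp.trans hy).le hyx h0)) hM
    rw [← he]
    exact (Real.rpow_lt_rpow hp.le hy h0).le

lemma cw_K_pos (a : ℝ) (h0 : 0 < a) (h1 : a < 1) (x : ℝ) (hx : 1 < x) : 0 < cwK a x := by
  rw [← cw_K_one a h1]
  refine cw_incr _ _ (cw_K' a h1) 1 x one_pos hx (fun y hy _ => ?_)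
  exact mul_pos (cw_g_pos a h0 y hy) (cw_L_pos a h0 h1 y hy)

lemma cw_K_neg (a : ℝ) (h0 : 0 < a) (h1 : a < 1) (x : ℝ) (h : 0 < x) (hx : x < 1) :
    cwK a x < 0 := by
  rcases le_or_gt (1 - a) (x ^ a) with hc | hc
  · rw [← cw_K_one a h1]
    refine cw_incr _ _ (cw_K' a h1) x 1 h hx (fun y hy hy1 => ?_)
    exact mul_pos_of_neg_of_neg (cw_g_neg a h0 y (h.trans hy) hy1)
      (cw_L_neg a h0 h1 y (h.trans hy) hy1 (hc.trans (Real.rpow_lt_rpow h.le hy h0).le))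
  · have hG : 0 < cwG a x := by
      rw [← cw_G_one a h1]
      exact cw_decr _ _ (cw_G' a h1) x 1 h hx
        (fun y hy hy1 => cw_g_neg a h0 y (h.trans hy) hy1)
    have hw := Real.rpow_pos_of_pos h a
    have h2 : 1 - (1 - a) / x ^ a ≤ 0 := by
      have := (one_lt_div hw).2 hc
      linarith
    have h3 : x * x ^ a * (x - x / x ^ a) ^ 2 * (1 - (1 - a) / x ^ a) ≤ 0 :=
      mul_nonpos_of_nonneg_of_nonpos (by positivity) h2
    have h4 : 0 < 2 * a ^ 2 * cwG a x := by positivity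
    unfold cwK
    linarith

lemma cw_H_pos (a : ℝ) (h0 : 0 < a) (h1 : a < 1) (x : ℝ) (h : 0 < x) (hx : x ≠ 1) :
    0 < cwH a x := by
  have hb : 0 < 1 - a := by linarith
  rw [← cw_H_one a h1]
  have hpos : ∀ y : ℝ, 0 < y → 0 < (1 - a) / (a * (y * y ^ a)) := fun y hy => by
    have := Real.rpow_pos_of_pos hy a
    positivity
  rcases lt_or_gt_of_ne hx with hx | hx
  · exact cw_decr _ _ (cw_H' a h0 h1) x 1 h hx (fun y hy hy1 =>
      mul_neg_of_pos_of_neg (hpos y (h.trans hy)) (cw_K_neg a h0 h1 y (h.trans hy) hy1))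
  · exact cw_incr _ _ (cw_H' a h0 h1) 1 x one_pos hx (fun y hy _ =>
      mul_pos (hpos y (one_pos.trans hy)) (cw_K_pos a h0 h1 y hy))

/-- For `n ≥ 5`, `g(u) = u - u^(1-4/n)`, `G` its antiderivative vanishing
at `1`, `g'(1) = 4/n` and `g''(1) = (4/n)(1-4/n)`, the Chow–Wang criterion function
`H(u) = g(u)² - 2 G(u) g'(u) + (g''(1)/(3 g'(1)²)) g(u)³` is positive for `u > 0`, `u ≠ 1`,
where `g'(u) = 1 - (1-4/n) u^(-4/n)`. -/
theorem chow_wang_H_positive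
    (n : ℕ) (hn : 5 ≤ n) (u : ℝ) (hu : 0 < u) (hu1 : u ≠ 1) :
    0 < derdzg n u ^ 2
      - 2 * derdzG n u * (1 - (1 - 4 / (n : ℝ)) * u ^ (-(4 / (n : ℝ))))
      + (((4 / (n : ℝ)) * (1 - 4 / (n : ℝ))) / (3 * (4 / (n : ℝ)) ^ 2)) * derdzg n u ^ 3 := by
  have hn' : (5 : ℝ) ≤ n := by exact_mod_cast hn
  have hn0 : (0 : ℝ) < n := by linarith
  have h0 : 0 < 4 / (n : ℝ) := by positivity
  have h1 : 4 / (n : ℝ) < 1 := by rw [div_lt_one hn0]; linarith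
  have key := cw_H_pos (4 / (n : ℝ)) h0 h1 u hu hu1
  have hg : derdzg n u = u - u / u ^ (4 / (n : ℝ)) := by
    unfold derdzg
    rw [Real.rpow_sub hu, Real.rpow_one]
  have hG : derdzG n u = cwG (4 / (n : ℝ)) u := by
    unfold derdzG cwG
    rw [Real.rpow_sub hu, Real.rpow_two]
    have e2 : (n : ℝ) - 2 ≠ 0 := by linarith
    have c1 : (n : ℝ) / (2 * n - 4) = 1 / (2 - 4 / (n : ℝ)) := by
      have e1 : 2 * (n : ℝ) - 4 ≠ 0 := by linarith
      have e3 : 2 - 4 / (n : ℝ) ≠ 0 := by linarith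
      rw [div_eq_div_iff e1 e3]
      field_simp
    have c2 : 1 / ((n : ℝ) - 2) = 4 / (n : ℝ) / (2 * (2 - 4 / (n : ℝ))) := by
      have e3 : 2 * (2 - 4 / (n : ℝ)) ≠ 0 := by linarith
      rw [div_eq_div_iff e2 e3]
      field_simp
      ring
    rw [c1, c2]
    ring
  have hc : (4 / (n : ℝ)) * (1 - 4 / (n : ℝ)) / (3 * (4 / (n : ℝ)) ^ 2)
      = (1 - 4 / (n : ℝ)) / (3 * (4 / (n : ℝ))) := by
    generalize 4 / (n : ℝ) = a at h0
    field_simp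
  rw [hg, hG, hc, Real.rpow_neg hu.le, ← div_eq_mul_inv]
  exact key
end

section
/- Let n ≥ 3 be an integer and T > 0 a real number. The equation u'' - ((n-2)²/4) u + (n(n-2)/4) u^((n+2)/(n-2)) = 0 admits a nonconstant positive periodic solution u : ℝ → ℝ with minimal period T if and only if T > 2π/√(n-2). -/
open Real

lemma yam_wirtinger (T : ℝ) (hT : 0 < T) (v v' : ℝ → ℝ) (hv : ∀ t, HasDerivAt v (v' t) t)
    (hv' : Continuous v') (hper : v 0 = v T) (hmean : ∫ t in (0:ℝ)..T, v t = 0) :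
    (2 * π / T) ^ 2 * ∫ t in (0:ℝ)..T, v t ^ 2 ≤ ∫ t in (0:ℝ)..T, v' t ^ 2 := by
  have hvc : Continuous v := continuous_iff_continuousAt.2 fun t => (hv t).continuousAt
  have memLp : ∀ f : ℝ → ℝ, Continuous f → MeasureTheory.MemLp (fun t => (f t : ℂ)) 2
      (MeasureTheory.volume.restrict (Set.Ioc 0 T)) := by
    intro f hf
    have hc : Continuous (fun t => (f t : ℂ)) := by fun_prop
    obtain ⟨M, hM⟩ := (isCompact_Icc (a := (0:ℝ)) (b := T)).exists_bound_of_continuousOn hc.continuousOn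
    refine MeasureTheory.MemLp.of_bound hc.aestronglyMeasurable M ?_
    filter_upwards [MeasureTheory.ae_restrict_mem measurableSet_Ioc] with x hx
    exact hM x (Set.Ioc_subset_Icc_self hx)
  have s1 := hasSum_sq_fourierCoeffOn hT (memLp v hvc)
  have s2 := hasSum_sq_fourierCoeffOn hT (memLp v' hv')
  have key : ∀ i : ℤ, (2 * π / T) ^ 2 * ‖fourierCoeffOn hT (fun t => (v t : ℂ)) i‖ ^ 2 ≤
      ‖fourierCoeffOn hT (fun t => (v' t : ℂ)) i‖ ^ 2 := by
    intro i
    by_cases hi : i = 0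
    · subst hi
      have : fourierCoeffOn hT (fun t => (v t : ℂ)) 0 = 0 := by
        rw [fourierCoeffOn_eq_integral]
        simp [intervalIntegral.integral_ofReal, hmean]
      rw [this]; simp
    · have := fourierCoeffOn_of_hasDerivAt hT (f := fun t => (v t : ℂ)) (f' := fun t => (v' t : ℂ))
        hi (fun x _ => (hv x).ofReal_comp)
        ((by fun_prop : Continuous (fun t => (v' t : ℂ))).intervalIntegrable _ _)
      rw [this]
      simp only [hper, sub_self, mul_zero, zero_sub, norm_mul, norm_neg, norm_div]
      have h1 : (1:ℝ) ≤ |(i:ℝ)| := by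
        have := Int.one_le_abs hi
        exact_mod_cast this
      have h2 : (1:ℝ) ≤ (i:ℝ)^2 := by rw [← sq_abs]; nlinarith
      simp [abs_of_pos hT, abs_of_pos pi_pos]
      rw [show (2 * π / T) ^ 2 * (|(i:ℝ)|⁻¹ * (π⁻¹ * 2⁻¹) * (T * ‖fourierCoeffOn hT (fun t => (v' t : ℂ)) i‖)) ^ 2
        = (|(i:ℝ)|^2)⁻¹ * ‖fourierCoeffOn hT (fun t => (v' t : ℂ)) i‖ ^ 2 by field_simp]
      rw [sq_abs]
      exact mul_le_of_le_one_left (by positivity) (inv_le_one_of_one_le₀ h2)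
  have := hasSum_le key (s1.mul_left _) s2
  simp only [Complex.norm_real, Real.norm_eq_abs, sq_abs, smul_eq_mul, sub_zero] at this
  have h3 : T⁻¹ * ((2 * π / T) ^ 2 * ∫ t in (0:ℝ)..T, v t ^ 2) ≤ T⁻¹ * ∫ t in (0:ℝ)..T, v' t ^ 2 := by
    linarith
  exact le_of_mul_le_mul_left h3 (by positivity)

lemma yam_lower (n : ℕ) (hn : 3 ≤ n) (T : ℝ) (hT : 0 < T) (u : ℝ → ℝ) (hu : ContDiff ℝ 2 u)
    (hpos : ∀ t, 0 < u t) (hnc : ¬ ∃ a : ℝ, ∀ t, u t = a)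
    (hode : ∀ t, deriv (deriv u) t - (((n : ℝ) - 2) ^ 2 / 4) * u t
          + ((n : ℝ) * ((n : ℝ) - 2) / 4) * u t ^ (((n : ℝ) + 2) / ((n : ℝ) - 2)) = 0)
    (hper : Function.Periodic u T) : 2 * π / Real.sqrt ((n : ℝ) - 2) < T := by
  have hn' : (3:ℝ) ≤ n := by exact_mod_cast hn
  have hd : 0 < (n:ℝ) - 2 := by linarith
  have hu1 : ContDiff ℝ 1 (deriv u) := by
    have := (contDiff_succ_iff_deriv (𝕜 := ℝ) (n := 1) (f := u)).1 (by rw [one_add_one_eq_two]; exact hu)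
    exact this.2.2
  set v := deriv u with hvdef
  set p := ((n : ℝ) + 2) / ((n : ℝ) - 2) with hp
  have hp1 : 1 < p := by rw [hp, lt_div_iff₀ hd]; linarith
  have hud : ∀ t, HasDerivAt u (v t) t := fun t =>
    ((hu.differentiable (by norm_num)) t).hasDerivAt
  have hvd : ∀ t, HasDerivAt v (deriv v t) t := fun t =>
    ((hu1.differentiable (by norm_num)) t).hasDerivAt
  have hvc : Continuous v := hu1.continuous
  have huc : Continuous u := hu.continuous
  have hsc : Continuous (deriv v) := (contDiff_one_iff_deriv.1 hu1).2
  set s := deriv v with hs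
  have hseq : ∀ t, s t = (((n : ℝ) - 2) ^ 2 / 4) * u t
          - ((n : ℝ) * ((n : ℝ) - 2) / 4) * u t ^ p := fun t => by linarith [hode t]
  have hvper : Function.Periodic v T := by
    intro t
    have h1 : HasDerivAt (fun x => u (x + T)) (v (t + T)) t := (hud (t + T)).comp_add_const t T
    have h2 : (fun x => u (x + T)) = u := funext hper
    rw [h2] at h1
    exact h1.unique (hud t)
  have hsper : s T = s 0 := by
    rw [hseq, hseq]; have := hper 0; rw [zero_add] at this; rw [this]
  have hsd : ∀ t, HasDerivAt s ((((n : ℝ) - 2) ^ 2 / 4) * v t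
      - ((n : ℝ) * ((n : ℝ) - 2) / 4) * (v t * p * u t ^ (p - 1))) t := by
    intro t
    have h : s = fun t => (((n : ℝ) - 2) ^ 2 / 4) * u t
          - ((n : ℝ) * ((n : ℝ) - 2) / 4) * u t ^ p := funext hseq
    rw [h]
    exact ((hud t).const_mul _).sub (((hud t).rpow_const (Or.inl (hpos t).ne')).const_mul _)
  have hF : ∀ t, HasDerivAt (fun t => v t * s t - p / 3 * (v t ^ 3 / u t))
      (s t ^ 2 - ((n:ℝ) - 2) * v t ^ 2 + p / 3 * (v t ^ 4 / u t ^ 2)) t := by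
    intro t
    have h := ((hvd t).mul (hsd t)).sub (((((hvd t).pow 3).div (hud t) (hpos t).ne')).const_mul (p/3))
    refine h.congr_deriv ?_
    have hu0 := (hpos t).ne'
    have e1 : u t ^ (p - 1) = u t ^ p / u t := by rw [rpow_sub_one hu0]
    have hs1 := hseq t
    rw [e1]
    have e2 : ((n : ℝ) * ((n : ℝ) - 2) / 4) * u t ^ p = (((n : ℝ) - 2) ^ 2 / 4) * u t - s t := by
      linarith
    have e3 : ((n : ℝ) * ((n : ℝ) - 2) / 4) * (v t * p * (u t ^ p / u t)) =
      v t * p * ((((n : ℝ) - 2) ^ 2 / 4) * u t - s t) / u t := by rw [← e2]; ring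
    rw [e3]
    have e4 : (p - 1) * (((n : ℝ) - 2) ^ 2 / 4) = (n:ℝ) - 2 := by
      rw [hp]; field_simp; ring
    generalize ((n : ℝ) - 2) ^ 2 / 4 = A at e4 ⊢
    rw [← e4]
    simp only [Nat.cast_ofNat, Pi.pow_apply]
    field_simp
    ring
  have hIc : Continuous (fun t => v t ^ 4 / u t ^ 2) :=
    (hvc.pow 4).div (huc.pow 2) (fun t => (pow_pos (hpos t) 2).ne')
  have hint : ∫ t in (0:ℝ)..T, (s t ^ 2 - ((n:ℝ) - 2) * v t ^ 2 + p / 3 * (v t ^ 4 / u t ^ 2)) = 0 := by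
    rw [intervalIntegral.integral_eq_sub_of_hasDerivAt (fun t _ => hF t)]
    · have a1 := hper 0
      have a2 := hvper 0
      rw [zero_add] at a1 a2
      simp only [a1, a2, hsper, sub_self]
    · exact Continuous.intervalIntegrable (by fun_prop) _ _
  have hint2 : (∫ t in (0:ℝ)..T, s t ^ 2) - ((n:ℝ) - 2) * (∫ t in (0:ℝ)..T, v t ^ 2)
      + p / 3 * (∫ t in (0:ℝ)..T, (v t ^ 4 / u t ^ 2)) = 0 := by
    rw [← intervalIntegral.integral_const_mul, ← intervalIntegral.integral_const_mul,
      ← intervalIntegral.integral_sub, ← intervalIntegral.integral_add]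
    · exact hint
    all_goals exact Continuous.intervalIntegrable (by fun_prop) _ _
  -- some point where v is nonzero
  obtain ⟨c, hc, hvne⟩ : ∃ c ∈ Set.Icc (0:ℝ) T, v c ≠ 0 := by
    by_contra! hcon
    have hv0 : ∀ t, v t = 0 := by
      intro t
      obtain ⟨y, hy, hy2⟩ := hvper.exists_mem_Ico₀ hT t
      rw [hy2]; exact hcon y ⟨hy.1, hy.2.le⟩
    exact hnc ⟨u 0, fun t => is_const_of_deriv_eq_zero (hu.differentiable (by norm_num)) hv0 t 0⟩
  have hpos1 : 0 < ∫ t in (0:ℝ)..T, v t ^ 2 :=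
    intervalIntegral.integral_pos hT (by fun_prop) (fun x _ => by positivity) ⟨c, hc, by positivity⟩
  have hpos2 : 0 < ∫ t in (0:ℝ)..T, (v t ^ 4 / u t ^ 2) :=
    intervalIntegral.integral_pos hT hIc.continuousOn (fun x _ => by have := hpos x; positivity)
      ⟨c, hc, by have := hpos c; positivity⟩
  have hw := yam_wirtinger T hT v s hvd hsc (by simpa using (hvper 0).symm) (by
    rw [intervalIntegral.integral_eq_sub_of_hasDerivAt (fun t _ => hud t)
      (hvc.intervalIntegrable _ _)]
    have := hper 0; rw [zero_add] at this; rw [this, sub_self])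
  have hlt : (2 * π / T) ^ 2 * (∫ t in (0:ℝ)..T, v t ^ 2) < ((n:ℝ) - 2) * (∫ t in (0:ℝ)..T, v t ^ 2) := by
    have : 0 < p / 3 * (∫ t in (0:ℝ)..T, (v t ^ 4 / u t ^ 2)) := by positivity
    linarith
  have hlt2 := lt_of_mul_lt_mul_right hlt hpos1.le
  have h5 : 2 * π / T < Real.sqrt ((n:ℝ) - 2) := Real.lt_sqrt_of_sq_lt hlt2
  rw [div_lt_iff₀ hT] at h5
  rw [div_lt_iff₀ (Real.sqrt_pos.2 hd)]
  linarith

noncomputable def yamW (ρ φ : ℝ) : ℝ := (1 + ρ) / 2 + (ρ - 1) / 2 * sin φ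

lemma yam_param (ρ C T : ℝ) (N : ℕ) (hρ : 1 < ρ) (P : ℝ → ℝ) (hPd : Differentiable ℝ P)
    (hPpos : ∀ w, 1 ≤ w → 0 < P w)
    (hF : ∀ w, (w - 1) * (ρ - w) * P w = w ^ 2 - 1 - C * (w ^ N - 1))
    (hT : T = ∫ φ in (0:ℝ)..(2 * π), (sqrt (P (yamW ρ φ)))⁻¹) :
    0 < T ∧ ∃ w w1 : ℝ → ℝ, (∀ t, HasDerivAt w (w1 t) t) ∧
      (∀ t, HasDerivAt w1 (w t - N * C / 2 * w t ^ (N - 1)) t) ∧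
      (∀ t, w1 t ^ 2 = w t ^ 2 - 1 - C * (w t ^ N - 1)) ∧ (∀ t, 1 ≤ w t) ∧
      Function.Periodic w T ∧ ∀ T', 0 < T' → T' < T → ¬ Function.Periodic w T' := by
  have hW1 : ∀ φ, 1 ≤ yamW ρ φ := by
    intro φ; unfold yamW; nlinarith [neg_one_le_sin φ]
  have hWd : ∀ φ, HasDerivAt (yamW ρ) ((ρ - 1) / 2 * cos φ) φ := fun φ =>
    ((hasDerivAt_sin φ).const_mul _).const_add _
  have hWc : Continuous (yamW ρ) := continuous_iff_continuousAt.2 fun t => (hWd t).continuousAt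
  have hQpos : ∀ φ, 0 < sqrt (P (yamW ρ φ)) := fun φ => sqrt_pos.2 (hPpos _ (hW1 φ))
  set g : ℝ → ℝ := fun φ => (sqrt (P (yamW ρ φ)))⁻¹ with hg
  have hgpos : ∀ φ, 0 < g φ := fun φ => inv_pos.2 (hQpos φ)
  have hgc : Continuous g := by
    refine Continuous.inv₀ ?_ (fun φ => (hQpos φ).ne')
    exact continuous_sqrt.comp (hPd.continuous.comp hWc)
  have hgi : ∀ a b, IntervalIntegrable g MeasureTheory.volume a b := fun a b =>
    hgc.intervalIntegrable a b
  have hgper : Function.Periodic g (2 * π) := by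
    intro φ; simp only [hg, yamW, sin_add_two_pi]
  set τ : ℝ → ℝ := fun φ => ∫ x in (0:ℝ)..φ, g x with hτ
  have hτd : ∀ φ, HasDerivAt τ (g φ) φ := fun φ =>
    intervalIntegral.integral_hasDerivAt_right (hgi _ _)
      (hgc.stronglyMeasurableAtFilter _ _) hgc.continuousAt
  have hτc : Continuous τ := continuous_iff_continuousAt.2 fun t => (hτd t).continuousAt
  have hτm : StrictMono τ := strictMono_of_hasDerivAt_pos hτd hgpos
  have hτs : Function.Surjective τ := hτc.surjective
    (hgper.tendsto_atTop_intervalIntegral_of_pos' (hgi _ _) hgpos two_pi_pos)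
    (hgper.tendsto_atBot_intervalIntegral_of_pos' (hgi _ _) hgpos two_pi_pos)
  have hτadd : ∀ φ, τ (φ + 2 * π) = τ φ + T := by
    intro φ
    have := hgper.intervalIntegral_add_eq_add 0 φ hgi
    rw [zero_add] at this
    rw [hT]; exact this
  have hTpos : 0 < T := by
    have h0 := hτadd 0
    have := hτm (show (0:ℝ) < 0 + 2 * π by linarith [two_pi_pos])
    linarith
  let e := hτm.orderIsoOfSurjective τ hτs
  set Φ : ℝ → ℝ := fun t => e.symm t with hΦ
  have hΦc : Continuous Φ := e.symm.continuous
  have hτΦ : ∀ t, τ (Φ t) = t := fun t => e.apply_symm_apply t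
  have hΦτ : ∀ t, Φ (τ t) = t := fun t => e.symm_apply_apply t
  have hΦm : StrictMono Φ := e.symm.strictMono
  have hΦd : ∀ t, HasDerivAt Φ (sqrt (P (yamW ρ (Φ t)))) t := by
    intro t
    have := HasDerivAt.of_local_left_inverse hΦc.continuousAt (hτd (Φ t)) (hgpos _).ne'
      (Filter.Eventually.of_forall hτΦ)
    simpa [hg] using this
  have hΦadd : ∀ t, Φ (t + T) = Φ t + 2 * π := by
    intro t
    conv_lhs => rw [← hτΦ t, ← hτadd, hΦτ]
  have hPder : ∀ w, deriv P w * ((w - 1) * (ρ - w)) + P w * (ρ + 1 - 2 * w)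
      = 2 * w - C * (N * w ^ (N - 1)) := by
    intro w
    have h1 : HasDerivAt (fun w => (w - 1) * (ρ - w) * P w)
        ((1 * (ρ - w) + (w - 1) * (-1)) * P w + (w - 1) * (ρ - w) * deriv P w) w :=
      ((((hasDerivAt_id w).sub_const 1).mul ((hasDerivAt_id w).const_sub ρ)).mul
        (hPd w).hasDerivAt)
    have h2 : HasDerivAt (fun w => w ^ 2 - 1 - C * (w ^ N - 1))
        (((2:ℕ):ℝ) * w ^ (2 - 1) - C * (N * w ^ (N - 1))) w :=
      ((hasDerivAt_pow 2 w).sub_const 1).sub (((hasDerivAt_pow N w).sub_const 1).const_mul C)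
    rw [funext hF] at h1
    have := h1.unique h2
    norm_num at this
    linarith
  refine ⟨hTpos, fun t => yamW ρ (Φ t),
    fun t => (ρ - 1) / 2 * cos (Φ t) * sqrt (P (yamW ρ (Φ t))), ?_, ?_, ?_, fun t => hW1 _, ?_, ?_⟩
  · intro t
    exact (hWd (Φ t)).comp t (hΦd t)
  · intro t
    have h1 : HasDerivAt (fun φ => (ρ - 1) / 2 * cos φ * sqrt (P (yamW ρ φ)))
        (((ρ - 1) / 2 * (-sin (Φ t))) * sqrt (P (yamW ρ (Φ t))) + (ρ - 1) / 2 * cos (Φ t) *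
          (deriv P (yamW ρ (Φ t)) * ((ρ - 1) / 2 * cos (Φ t)) / (2 * sqrt (P (yamW ρ (Φ t)))))) (Φ t) :=
      ((hasDerivAt_cos (Φ t)).const_mul _).mul
        (((hPd _).hasDerivAt.comp (Φ t) (hWd (Φ t))).sqrt (hPpos _ (hW1 _)).ne')
    have h2 := h1.comp t (hΦd t)
    refine h2.congr_deriv ?_
    have k := hPder (yamW ρ (Φ t))
    have q0 := hQpos (Φ t)
    have q2 : sqrt (P (yamW ρ (Φ t))) ^ 2 = P (yamW ρ (Φ t)) := sq_sqrt (hPpos _ (hW1 _)).le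
    have hw : (yamW ρ (Φ t) - 1) * (ρ - yamW ρ (Φ t)) = ((ρ - 1) / 2 * cos (Φ t)) ^ 2 := by
      unfold yamW
      rw [mul_pow, cos_sq']; ring
    have hw2 : ρ + 1 - 2 * yamW ρ (Φ t) = - ((ρ - 1) * sin (Φ t)) := by unfold yamW; ring
    rw [hw, hw2] at k
    generalize sqrt (P (yamW ρ (Φ t))) = q at *
    rw [← q2] at k
    generalize deriv P (yamW ρ (Φ t)) = D at *
    have : ((ρ - 1) / 2 * (-sin (Φ t)) * q + (ρ - 1) / 2 * cos (Φ t) *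
          (D * ((ρ - 1) / 2 * cos (Φ t)) / (2 * q))) * q =
        (D * ((ρ - 1) / 2 * cos (Φ t)) ^ 2 + q ^ 2 * -((ρ - 1) * sin (Φ t))) / 2 := by
      field_simp; ring
    rw [this, k]; ring
  · intro t
    have hw : (yamW ρ (Φ t) - 1) * (ρ - yamW ρ (Φ t)) = ((ρ - 1) / 2 * cos (Φ t)) ^ 2 := by
      unfold yamW
      rw [mul_pow, cos_sq']; ring
    rw [mul_pow, sq_sqrt (hPpos _ (hW1 _)).le, ← hw, hF]
  · intro t
    simp only [hΦadd, yamW, sin_add_two_pi]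
  · intro T' h0 h1 hp
    have := hp (τ (π / 2))
    simp only [hΦτ, yamW, sin_pi_div_two] at this
    have hs : sin (Φ (τ (π / 2) + T')) = 1 := by
      have h3 : (ρ - 1) / 2 ≠ 0 := by linarith
      have h4 : (ρ - 1) / 2 * sin (Φ (τ (π / 2) + T')) = (ρ - 1) / 2 * 1 := by linarith
      exact mul_left_cancel₀ h3 h4
    have l1 : π / 2 < Φ (τ (π / 2) + T') := by
      have := hΦm (show τ (π / 2) < τ (π / 2) + T' by linarith)
      rwa [hΦτ] at this
    have l2 : Φ (τ (π / 2) + T') < π / 2 + 2 * π := by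
      have := hΦm (show τ (π / 2) + T' < τ (π / 2) + T by linarith)
      rwa [hΦadd, hΦτ] at this
    generalize Φ (τ (π / 2) + T') = x at *
    have hc : cos (x - π / 2) = 1 := by rw [cos_sub_pi_div_two]; exact hs
    have := (cos_eq_one_iff_of_lt_of_lt (x := x - π / 2) (by linarith) (by linarith)).1 hc
    linarith

lemma yam_lift (n : ℕ) (hn : 3 ≤ n) (T C : ℝ) (hT : 0 < T) (hC : C < 1) (w w1 : ℝ → ℝ)
    (hw : ∀ t, HasDerivAt w (w1 t) t)
    (hw1 : ∀ t, HasDerivAt w1 (w t - n * C / 2 * w t ^ (n - 1)) t)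
    (hE : ∀ t, w1 t ^ 2 = w t ^ 2 - 1 - C * (w t ^ n - 1)) (hpos : ∀ t, 1 ≤ w t)
    (hper : Function.Periodic w T)
    (hmin : ∀ T', 0 < T' → T' < T → ¬ Function.Periodic w T') :
    ∃ u : ℝ → ℝ,
      ContDiff ℝ 2 u ∧
      (∀ t, 0 < u t) ∧
      (¬ ∃ a : ℝ, ∀ t, u t = a) ∧
      (∀ t, deriv (deriv u) t - (((n : ℝ) - 2) ^ 2 / 4) * u t
          + ((n : ℝ) * ((n : ℝ) - 2) / 4) * u t ^ (((n : ℝ) + 2) / ((n : ℝ) - 2)) = 0) ∧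
      Function.Periodic u T ∧
      (∀ T' : ℝ, 0 < T' → T' < T → ¬ Function.Periodic u T') := by
  have hn' : (3:ℝ) ≤ n := by exact_mod_cast hn
  set a : ℝ := ((n:ℝ) - 2) / 2 with ha
  have ha0 : 0 < a := by rw [ha]; linarith
  have hna : (n:ℝ) = 2 * a + 2 := by rw [ha]; ring
  have hk : 0 < 1 - C := by linarith
  set K : ℝ := (1 - C) ^ (a / 2) with hK
  have hK0 : 0 < K := rpow_pos_of_pos hk _
  have hwpos : ∀ t, 0 < w t := fun t => by linarith [hpos t]
  have hwc : Continuous w := continuous_iff_continuousAt.2 fun t => (hw t).continuousAt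
  have hw1c : Continuous w1 := continuous_iff_continuousAt.2 fun t => (hw1 t).continuousAt
  set u : ℝ → ℝ := fun t => K * w t ^ (-a) with hu
  set u1 : ℝ → ℝ := fun t => K * (w1 t * (-a) * w t ^ (-a - 1)) with hu1
  set u2 : ℝ → ℝ := fun t => K * (((w t - n * C / 2 * w t ^ (n - 1)) * (-a)) * w t ^ (-a - 1) +
    w1 t * (-a) * (w1 t * (-a - 1) * w t ^ (-a - 1 - 1))) with hu2
  have d1 : ∀ t, HasDerivAt u (u1 t) t := fun t =>
    ((hw t).rpow_const (Or.inl (hwpos t).ne')).const_mul K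
  have d2 : ∀ t, HasDerivAt u1 (u2 t) t := fun t =>
    (((hw1 t).mul_const (-a)).mul ((hw t).rpow_const (Or.inl (hwpos t).ne'))).const_mul K
  have e1 : deriv u = u1 := funext fun t => (d1 t).deriv
  have e2 : deriv u1 = u2 := funext fun t => (d2 t).deriv
  have hrc : ∀ b : ℝ, Continuous (fun t => w t ^ b) := fun b =>
    hwc.rpow_const (fun t => Or.inl (hwpos t).ne')
  have hu2c : Continuous u2 := by
    have := hrc (-a - 1)
    have := hrc (-a - 1 - 1)
    fun_prop
  have hinj : ∀ t s, u t = u s → w t = w s := by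
    intro t s h
    have h' : w t ^ (-a) = w s ^ (-a) := mul_left_cancel₀ hK0.ne' h
    rw [rpow_neg (hwpos t).le, rpow_neg (hwpos s).le, inv_inj] at h'
    exact (rpow_left_inj (hwpos t).le (hwpos s).le ha0.ne').1 h'
  have hminu : ∀ T' : ℝ, 0 < T' → T' < T → ¬ Function.Periodic u T' := fun T' h0 h1 h =>
    hmin T' h0 h1 (fun t => hinj _ _ (h t))
  refine ⟨u, ?_, fun t => mul_pos hK0 (rpow_pos_of_pos (hwpos t) _), ?_, ?_, ?_, hminu⟩
  · have : ContDiff ℝ 1 u1 := contDiff_one_iff_deriv.2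
      ⟨fun t => (d2 t).differentiableAt, by rw [e2]; exact hu2c⟩
    rw [← one_add_one_eq_two]
    exact contDiff_succ_iff_deriv.2 ⟨fun t => (d1 t).differentiableAt, by simp, by rw [e1]; exact this⟩
  · rintro ⟨c, hc⟩
    exact hminu (T / 2) (by linarith) (by linarith) (fun t => by rw [hc, hc])
  · intro t
    rw [e1, e2]
    have hp : ((n : ℝ) + 2) / ((n : ℝ) - 2) = (a + 2) / a := by
      rw [div_eq_div_iff (by linarith : (0:ℝ) < (n:ℝ) - 2).ne' ha0.ne', hna]; ring
    have w0 := hwpos t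
    have p1 : w t ^ (-a - 1) = w t ^ (-a) / w t := rpow_sub_one w0.ne' _
    have p2 : w t ^ (-a - 1 - 1) = w t ^ (-a) / w t / w t := by rw [rpow_sub_one w0.ne', p1]
    have p3 : u t ^ (((n : ℝ) + 2) / ((n : ℝ) - 2)) = (1 - C) * K * (w t ^ (-a) / w t / w t) := by
      rw [hp, ← p2]
      simp only [hu]
      rw [mul_rpow hK0.le (rpow_nonneg w0.le _), ← rpow_mul w0.le, hK, ← rpow_mul hk.le]
      congr 1
      · rw [← rpow_one_add' hk.le (by positivity)]
        congr 1; field_simp; ring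
      · congr 1; field_simp; ring
    have p4 : w t ^ n = w t ^ (n - 1) * w t := by
      rw [← pow_succ]; congr 1; omega
    have hEt := hE t
    rw [p3]
    simp only [hu2, hu]
    rw [p1, p2]
    generalize w t ^ (-a) = X at *
    have hX : K * ((w t - n * C / 2 * w t ^ (n - 1)) * (-a) * (X / w t) +
        w1 t * (-a) * (w1 t * (-a - 1) * (X / w t / w t))) =
      K * X * a * ((a + 1) * w1 t ^ 2 - (w t * w t - n * C / 2 * (w t ^ (n - 1) * w t))) / w t ^ 2 := by
      field_simp; ring
    rw [hX, ← p4, hEt]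
    rw [hna]
    generalize w t ^ n = Y at *
    field_simp
    ring
  · intro t; simp only [hu, hper t]
/-- complete homogeneous polynomial `∑ w^j ρ^(m-j)` -/
noncomputable def yamh : ℕ → ℝ → ℝ → ℝ
  | 0, _, _ => 1
  | m + 1, w, ρ => w ^ (m + 1) + ρ * yamh m w ρ

noncomputable def yamH : ℕ → ℝ → ℝ → ℝ
  | 0, _, _ => 0
  | m + 1, w, ρ => yamH m w ρ + (w * ρ * yamh m w ρ + yamh (m + 1) w ρ)

noncomputable def yamG (m : ℕ) (x : ℝ) : ℝ := ∑ i ∈ Finset.range m, x ^ i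

noncomputable def yamP (m : ℕ) (ρ w : ℝ) : ℝ := yamH m w ρ / yamG (m + 2) ρ

lemma yamh_mul (m : ℕ) (w ρ : ℝ) : (ρ - w) * yamh m w ρ = ρ ^ (m + 1) - w ^ (m + 1) := by
  induction m with
  | zero => simp [yamh]
  | succ m ih =>
    rw [yamh, mul_add, mul_left_comm, ih]; ring

lemma yamH_mul (m : ℕ) (w ρ : ℝ) :
    (ρ - w) * yamH m w ρ = (w + 1) * yamG (m + 2) ρ - (ρ + 1) * yamG (m + 2) w := by
  induction m with
  | zero => simp [yamH, yamG, Finset.sum_range_succ]; ring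
  | succ m ih =>
    have h1 := yamh_mul m w ρ
    have h2 := yamh_mul (m + 1) w ρ
    have g : ∀ x, yamG (m + 1 + 2) x = yamG (m + 2) x + x ^ (m + 2) := fun x => by
      unfold yamG; rw [Finset.sum_range_succ]
    rw [yamH, g, g]
    have : (ρ - w) * (yamH m w ρ + (w * ρ * yamh m w ρ + yamh (m + 1) w ρ)) =
      (ρ - w) * yamH m w ρ + w * ρ * ((ρ - w) * yamh m w ρ) + (ρ - w) * yamh (m + 1) w ρ := by ring
    rw [this, ih, h1, h2]; ring

lemma yamh_pos (m : ℕ) (w ρ : ℝ) (hw : 0 < w) (hρ : 0 < ρ) : 0 < yamh m w ρ := by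
  induction m with
  | zero => simp [yamh]
  | succ m ih => rw [yamh]; positivity

lemma yamH_nonneg (m : ℕ) (w ρ : ℝ) (hw : 0 < w) (hρ : 0 < ρ) : 0 ≤ yamH m w ρ := by
  induction m with
  | zero => simp [yamH]
  | succ m ih =>
    have := yamh_pos m w ρ hw hρ
    have := yamh_pos (m + 1) w ρ hw hρ
    rw [yamH]; positivity

lemma yamH_pos (m : ℕ) (hm : 1 ≤ m) (w ρ : ℝ) (hw : 0 < w) (hρ : 0 < ρ) : 0 < yamH m w ρ := by
  obtain ⟨k, rfl⟩ := Nat.exists_eq_add_of_le' hm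
  have := yamh_pos k w ρ hw hρ
  have := yamh_pos (k + 1) w ρ hw hρ
  have := yamH_nonneg k w ρ hw hρ
  rw [yamH]; positivity

lemma yamG_lt (m : ℕ) (hm : 1 ≤ m) (ρ : ℝ) (hρ : 0 < ρ) : ρ + 1 < yamG (m + 2) ρ := by
  obtain ⟨k, rfl⟩ := Nat.exists_eq_add_of_le' hm
  induction k with
  | zero => simp [yamG, Finset.sum_range_succ]; nlinarith [pow_pos hρ 2]
  | succ k ih =>
    have g : yamG (k + 1 + 1 + 2) ρ = yamG (k + 1 + 2) ρ + ρ ^ (k + 1 + 2) := by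
      unfold yamG; rw [Finset.sum_range_succ]
    rw [g]
    have := ih (by omega)
    have := pow_pos hρ (k + 1 + 2)
    linarith

lemma yamh_one (m : ℕ) : yamh m 1 1 = m + 1 := by
  induction m with
  | zero => simp [yamh]
  | succ m ih => rw [yamh, ih]; push_cast; ring

lemma yamH_one (m : ℕ) : yamH m 1 1 = m * (m + 2) := by
  induction m with
  | zero => simp [yamH]
  | succ m ih => rw [yamH, ih, yamh_one, yamh_one]; push_cast; ring

lemma yamP_one (m : ℕ) : yamP m 1 1 = m := by
  rw [yamP, yamH_one]
  simp [yamG]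
  field_simp

lemma yamh_cont (m : ℕ) : Continuous (fun p : ℝ × ℝ => yamh m p.1 p.2) := by
  induction m with
  | zero => simp only [yamh]; fun_prop
  | succ m ih => simp only [yamh]; fun_prop

lemma yamH_cont (m : ℕ) : Continuous (fun p : ℝ × ℝ => yamH m p.1 p.2) := by
  induction m with
  | zero => simp only [yamH]; fun_prop
  | succ m ih =>
    have := yamh_cont m
    have := yamh_cont (m + 1)
    simp only [yamH]; fun_prop

lemma yamh_diff (m : ℕ) (ρ : ℝ) : Differentiable ℝ (fun w => yamh m w ρ) := by
  induction m with
  | zero => simp only [yamh]; fun_prop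
  | succ m ih => simp only [yamh]; fun_prop

lemma yamH_diff (m : ℕ) (ρ : ℝ) : Differentiable ℝ (fun w => yamH m w ρ) := by
  induction m with
  | zero => simp only [yamH]; fun_prop
  | succ m ih =>
    have := yamh_diff m ρ
    have := yamh_diff (m + 1) ρ
    simp only [yamH]; fun_prop

lemma yamP_diff (m : ℕ) (ρ : ℝ) : Differentiable ℝ (yamP m ρ) :=
  (yamH_diff m ρ).div_const _

lemma yamP_pos (m : ℕ) (hm : 1 ≤ m) (ρ w : ℝ) (hρ : 1 ≤ ρ) (hw : 1 ≤ w) : 0 < yamP m ρ w := by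
  have := yamG_lt m hm ρ (by linarith)
  exact div_pos (yamH_pos m hm w ρ (by linarith) (by linarith)) (by linarith)

lemma yamP_eq (m : ℕ) (hm : 1 ≤ m) (ρ w : ℝ) (hρ : 1 ≤ ρ) :
    (w - 1) * (ρ - w) * yamP m ρ w =
      w ^ 2 - 1 - (ρ + 1) / yamG (m + 2) ρ * (w ^ (m + 2) - 1) := by
  have hG := yamG_lt m hm ρ (by linarith)
  have hG0 : yamG (m + 2) ρ ≠ 0 := by linarith
  have h1 := yamH_mul m w ρ
  have h2 : yamG (m + 2) w * (w - 1) = w ^ (m + 2) - 1 := geom_sum_mul w (m + 2)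
  rw [yamP, ← h2]
  have : (w - 1) * (ρ - w) * (yamH m w ρ / yamG (m + 2) ρ) =
    (w - 1) * ((ρ - w) * yamH m w ρ) / yamG (m + 2) ρ := by ring
  rw [this, h1]
  field_simp
  ring

noncomputable def yamT (m : ℕ) (r : ℝ) : ℝ :=
  ∫ φ in (0:ℝ)..(2 * π), (sqrt (yamP m (1 + r ^ 2) (yamW (1 + r ^ 2) φ)))⁻¹

lemma yamW_ge (ρ φ : ℝ) (hρ : 1 ≤ ρ) : 1 ≤ yamW ρ φ := by
  unfold yamW; nlinarith [neg_one_le_sin φ]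

lemma yamg_cont (m : ℕ) (hm : 1 ≤ m) : Continuous (fun p : ℝ × ℝ =>
    (sqrt (yamP m (1 + p.1 ^ 2) (yamW (1 + p.1 ^ 2) p.2)))⁻¹) := by
  have hρ : ∀ r : ℝ, 1 ≤ 1 + r ^ 2 := fun r => by nlinarith [sq_nonneg r]
  refine Continuous.inv₀ ?_ (fun p => ?_)
  · refine continuous_sqrt.comp ?_
    unfold yamP
    refine Continuous.div ?_ ?_ ?_
    · have h : Continuous (fun p : ℝ × ℝ => (yamW (1 + p.1 ^ 2) p.2, 1 + p.1 ^ 2)) := by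
        unfold yamW; fun_prop
      exact (yamH_cont m).comp h
    · unfold yamG; fun_prop
    · intro p
      have := yamG_lt m hm (1 + p.1 ^ 2) (by linarith [hρ p.1])
      have := hρ p.1
      linarith
  · exact (sqrt_pos.2 (yamP_pos m hm _ _ (hρ _) (yamW_ge _ _ (hρ _)))).ne'

lemma yamT_cont (m : ℕ) (hm : 1 ≤ m) : Continuous (yamT m) :=
  intervalIntegral.continuous_parametric_intervalIntegral_of_continuous'
    (f := fun r φ => (sqrt (yamP m (1 + r ^ 2) (yamW (1 + r ^ 2) φ)))⁻¹) (yamg_cont m hm) _ _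

lemma yamT_zero (m : ℕ) : yamT m 0 = 2 * π / sqrt m := by
  have : ∀ φ, yamW 1 φ = 1 := fun φ => by simp [yamW]
  simp [yamT, this, yamP_one]
  ring

lemma yamT_ge (m : ℕ) (hm : 1 ≤ m) (r : ℝ) : log (1 + r ^ 2 / 2) ≤ yamT m r := by
  have hρ : 1 ≤ 1 + r ^ 2 := by nlinarith [sq_nonneg r]
  have hgc : Continuous (fun φ => (sqrt (yamP m (1 + r ^ 2) (yamW (1 + r ^ 2) φ)))⁻¹) :=
    (yamg_cont m hm).comp (by fun_prop : Continuous fun φ : ℝ => (r, φ))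
  unfold yamT
  have hr : (1 + r ^ 2 - 1) / 2 = r ^ 2 / 2 := by ring
  set ρ := 1 + r ^ 2 with hρd
  have hWpos : ∀ φ, 0 < yamW ρ φ := fun φ => by linarith [yamW_ge ρ φ hρ]
  have hWd : ∀ φ, HasDerivAt (yamW ρ) ((ρ - 1) / 2 * cos φ) φ := fun φ =>
    ((hasDerivAt_sin φ).const_mul _).const_add _
  have hWc : Continuous (yamW ρ) := continuous_iff_continuousAt.2 fun t => (hWd t).continuousAt
  have hld : ∀ φ, HasDerivAt (fun φ => log (yamW ρ φ)) ((ρ - 1) / 2 * cos φ / yamW ρ φ) φ :=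
    fun φ => (hWd φ).log (hWpos φ).ne'
  have hlc : Continuous (fun φ => (ρ - 1) / 2 * cos φ / yamW ρ φ) :=
    (by fun_prop : Continuous (fun φ => (ρ - 1) / 2 * cos φ)).div hWc (fun φ => (hWpos φ).ne')
  have hle : ∀ φ, (ρ - 1) / 2 * cos φ / yamW ρ φ ≤ (sqrt (yamP m ρ (yamW ρ φ)))⁻¹ := by
    intro φ
    have hP := yamP_pos m hm ρ _ hρ (yamW_ge ρ φ hρ)
    rw [div_le_iff₀ (hWpos φ), inv_mul_eq_div, le_div_iff₀ (sqrt_pos.2 hP)]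
    refine le_of_abs_le (abs_le_of_sq_le_sq ?_ (hWpos φ).le)
    have hw : (yamW ρ φ - 1) * (ρ - yamW ρ φ) = ((ρ - 1) / 2 * cos φ) ^ 2 := by
      unfold yamW
      rw [mul_pow, cos_sq']; ring
    rw [mul_pow, sq_sqrt hP.le, ← hw, yamP_eq m hm ρ _ hρ]
    have hG := yamG_lt m hm ρ (by linarith)
    have h1 : 0 ≤ (ρ + 1) / yamG (m + 2) ρ := div_nonneg (by linarith) (by linarith)
    have h2 : 1 ≤ yamW ρ φ ^ (m + 2) := one_le_pow₀ (yamW_ge ρ φ hρ)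
    have h3 := mul_nonneg h1 (sub_nonneg.2 h2)
    linarith
  have s3 : sin (3 * π / 2) = -1 := by
    rw [show 3 * π / 2 = π / 2 + π by ring, sin_add_pi, sin_pi_div_two]
  calc log (1 + r ^ 2 / 2) = ∫ φ in (3 * π / 2)..(2 * π), (ρ - 1) / 2 * cos φ / yamW ρ φ := by
        rw [intervalIntegral.integral_eq_sub_of_hasDerivAt (fun φ _ => hld φ)
          (hlc.intervalIntegrable _ _)]
        simp only [yamW, s3, sin_two_pi, hρd]
        rw [show (1 + (1 + r ^ 2)) / 2 + (1 + r ^ 2 - 1) / 2 * -1 = 1 by ring, log_one, sub_zero]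
        congr 1; ring
    _ ≤ ∫ φ in (3 * π / 2)..(2 * π), (sqrt (yamP m ρ (yamW ρ φ)))⁻¹ :=
        intervalIntegral.integral_mono_on (by linarith [pi_pos]) (hlc.intervalIntegrable _ _)
          (hgc.intervalIntegrable _ _) (fun φ _ => hle φ)
    _ ≤ _ := by
        refine intervalIntegral.integral_mono_interval (by linarith [pi_pos]) (by linarith [pi_pos])
          le_rfl ?_ (hgc.intervalIntegrable _ _)
        exact Filter.Eventually.of_forall fun φ => inv_nonneg.2 (sqrt_nonneg _)

lemma yam_exists (m : ℕ) (hm : 1 ≤ m) (T : ℝ) (hT : 2 * π / sqrt m < T) :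
    ∃ r : ℝ, r ≠ 0 ∧ yamT m r = T := by
  have hT0 : 0 < T := lt_of_le_of_lt (by positivity) hT
  set R := sqrt (2 * exp T) with hR
  have hR2 : R ^ 2 = 2 * exp T := sq_sqrt (by positivity)
  have h1 : T ≤ yamT m R := by
    refine le_trans ?_ (yamT_ge m hm R)
    rw [hR2, le_log_iff_exp_le (by positivity)]
    linarith
  obtain ⟨r, -, hr⟩ := intermediate_value_Icc (sqrt_nonneg _ : 0 ≤ R)
    (yamT_cont m hm).continuousOn ⟨by rw [yamT_zero]; exact hT.le, h1⟩
  refine ⟨r, ?_, hr⟩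
  rintro rfl
  rw [yamT_zero] at hr
  exact hT.ne hr


/-- For `n ≥ 3` and `T > 0`, the Yamabe ODE
`u'' - ((n-2)²/4) u + (n(n-2)/4) u^((n+2)/(n-2)) = 0` admits a nonconstant positive
periodic solution with minimal period `T` if and only if `T > 2π/√(n-2)`. -/
theorem yamabe_nonconstant_solution_iff
    (n : ℕ) (hn : 3 ≤ n) (T : ℝ) (hT : 0 < T) :
    (∃ u : ℝ → ℝ,
      ContDiff ℝ 2 u ∧
      (∀ t, 0 < u t) ∧
      (¬ ∃ a : ℝ, ∀ t, u t = a) ∧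
      (∀ t, deriv (deriv u) t - (((n : ℝ) - 2) ^ 2 / 4) * u t
          + ((n : ℝ) * ((n : ℝ) - 2) / 4) * u t ^ (((n : ℝ) + 2) / ((n : ℝ) - 2)) = 0) ∧
      Function.Periodic u T ∧
      (∀ T' : ℝ, 0 < T' → T' < T → ¬ Function.Periodic u T')) ↔
    2 * π / Real.sqrt ((n : ℝ) - 2) < T := by

  constructor
  · rintro ⟨u, hu, hpos, hnc, hode, hper, -⟩
    exact yam_lower n hn T hT u hu hpos hnc hode hper
  · intro h
    obtain ⟨m, rfl⟩ := Nat.exists_eq_add_of_le' (show 2 ≤ n by omega)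
    have hm : 1 ≤ m := by omega
    have hc : ((m + 2 : ℕ) : ℝ) - 2 = m := by push_cast; ring
    obtain ⟨r, hr0, hr⟩ := yam_exists m hm T (by rw [← hc]; exact h)
    have hρ : 1 < 1 + r ^ 2 := by have : 0 < r ^ 2 := by positivity
                                  linarith
    obtain ⟨-, w, w1, a1, a2, a3, a4, a5, a6⟩ := yam_param (1 + r ^ 2)
      ((1 + r ^ 2 + 1) / yamG (m + 2) (1 + r ^ 2)) T (m + 2) hρ (yamP m (1 + r ^ 2))
      (yamP_diff m _) (fun w hw => yamP_pos m hm _ w hρ.le hw)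
      (fun w => yamP_eq m hm _ w hρ.le) hr.symm
    have hG := yamG_lt m hm (1 + r ^ 2) (by linarith)
    exact yam_lift (m + 2) hn T _ hT ((div_lt_one (by linarith)).2 hG) w w1 a1 a2 a3 a4 a5 a6
end
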